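/- arXiv:2509.04271 — 3 statements merged into one kernel-verified Lean document; each statement's English description precedes it below -/
import Mathlib

section
/- Let G be a group, let A, B ⊆ G be nonempty finite sets, let N > 0 be real, and let ε ∈ (0,1). If d = VC^ℓ_B(A) is finite and ε ≤ N/|BA|, then cov(B : Stab^ℓ_N(A) ∩ B⁻¹B) ≤ (30/ε)^d; that is, there exists E ⊆ B with |E| ≤ (30/ε)^d such that B ⊆ E·(Stab^ℓ_N(A) ∩ B⁻¹B). -/
open scoped Pointwise symmDiff

/-- `Stab^ℓ_N(A) = {x : |xA △ A| ≤ N}`. -/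
def stabL {G : Type*} [Group G] (A : Set G) (N : ℝ) : Set G :=
  {x : G | (((x • A) ∆ A).ncard : ℝ) ≤ N}

/-- `Stab^r_N(A) = {x : |Ax △ A| ≤ N}`. -/
def stabR {G : Type*} [Group G] (A : Set G) (N : ℝ) : Set G :=
  {x : G | (((A * {x}) ∆ A).ncard : ℝ) ≤ N}

/-- `St^ℓ_ε(A) = Stab^ℓ_{ε|A|}(A)`. -/
def stL {G : Type*} [Group G] (A : Set G) (ε : ℝ) : Set G := stabL A (ε * A.ncard)

/-- `St^r_ε(A) = Stab^r_{ε|A|}(A)`. -/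
def stR {G : Type*} [Group G] (A : Set G) (ε : ℝ) : Set G := stabR A (ε * A.ncard)

/-- A family of sets shatters `S` if every subset of `S` is cut out by a member of the family. -/
def Shatters {α : Type*} (F : Set (Set α)) (S : Set α) : Prop :=
  ∀ T ⊆ S, ∃ f ∈ F, S ∩ f = T

/-- VC-dimension of a set system: the supremum of cardinalities of finite shattered sets. -/
noncomputable def vcDim {α : Type*} (F : Set (Set α)) : ℕ∞ :=
  ⨆ (S : Finset α) (_ : Shatters F ↑S), (S.card : ℕ∞)

/-- The family of left translates `{xA : x ∈ B}`. -/
def leftFam {G : Type*} [Group G] (A B : Set G) : Set (Set G) := (fun x => x • A) '' B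

/-- The family of right translates `{Ax : x ∈ B}`. -/
def rightFam {G : Type*} [Group G] (A B : Set G) : Set (Set G) := (fun x => A * {x}) '' B

/-- `Z^ℓ_ε(A,X) = {g : min(|gX ∩ A|, |gX \ A|) ≥ ε|X|}`. -/
def Zl {G : Type*} [Group G] (A X : Set G) (ε : ℝ) : Set G :=
  {g : G | ε * X.ncard ≤ min (((g • X) ∩ A).ncard : ℝ) (((g • X) \ A).ncard : ℝ)}

/-!
A maximal subset `E` of `B` whose translates of `A` pairwise differ in more than `N` points
satisfies the covering condition, so it remains to bound the size of a separated family of sets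
`𝒜` of VC-dimension `d` on a ground set `X`. This is Haussler's packing theorem, for which we use
Chazelle's simplification of the proof.

Draw `n` random points of `X`, weigh each trace on the sample by the number of members of `𝒜`
inducing it, and join traces that differ in one sample point by an edge as heavy as its lighter
endpoint. Splitting the cube along a coordinate as in the Sauer–Shelah lemma shows that the edges
weigh at most `d * #𝒜` in total. On the other hand, redraw the `i`-th sample point. The members of
`𝒜` with a given trace on the other points, say `m` of them, are pairwise separated by `ε * #X`,
so the new point splits them into two parts the smaller of which has expected size at least
`ε * (m - 1) / 2`. Summing over the traces, of which there are at most `Φ = ∑ k ≤ d, n.choose k`,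
and over `i` gives `n * ε * (#𝒜 - Φ) / 2 ≤ d * #𝒜`. Taking `n` just above `2 * (d + 1) / ε` leaves
`#𝒜 ≤ (d + 1) * Φ ≤ (30 / ε) ^ d`.
-/

section HausslerPacking

open scoped Finset

section VCDimension

variable {α : Type*} [DecidableEq α] {𝒜 : Finset (Finset α)}

theorem exists_shatters_card_eq_finset_vcDim (h𝒜 : 𝒜.Nonempty) :
    ∃ s, 𝒜.Shatters s ∧ #s = 𝒜.vcDim := by
  obtain ⟨s, hs, hcard⟩ := 𝒜.shatterer.exists_mem_eq_sup
    ⟨∅, Finset.mem_shatterer.2 (Finset.shatters_empty.2 h𝒜)⟩ Finset.card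
  exact ⟨s, Finset.mem_shatterer.1 hs, hcard.symm⟩

theorem finset_vcDim_le_of_forall_shatters {d : ℕ} (h : ∀ s, 𝒜.Shatters s → #s ≤ d) : 𝒜.vcDim ≤ d :=
  Finset.sup_le fun s hs => h s (Finset.mem_shatterer.1 hs)

theorem card_le_sum_choose_finset_vcDim [Fintype α] :
    #𝒜 ≤ ∑ k ∈ Finset.Iic 𝒜.vcDim, (Fintype.card α).choose k :=
  𝒜.card_le_card_shatterer.trans Finset.card_shatterer_le_sum_vcDim

theorem finset_vcDim_memberSubfamily_union_nonMemberSubfamily_le (a : α) :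
    (𝒜.memberSubfamily a ∪ 𝒜.nonMemberSubfamily a).vcDim ≤ 𝒜.vcDim := by
  refine finset_vcDim_le_of_forall_shatters fun s hs => Finset.Shatters.card_le_vcDim ?_
  rw [Finset.memberSubfamily_union_nonMemberSubfamily] at hs
  have ha : a ∉ s := by
    obtain ⟨_, hu, hsu⟩ := hs.exists_superset
    obtain ⟨u, -, rfl⟩ := Finset.mem_image.1 hu
    exact fun has => Finset.notMem_erase a u (hsu has)
  intro t ht
  obtain ⟨_, hu, rfl⟩ := hs ht
  obtain ⟨u, hu𝒜, rfl⟩ := Finset.mem_image.1 hu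
  exact ⟨u, hu𝒜, by rw [Finset.inter_erase, Finset.erase_eq_of_notMem (by simp [ha])]⟩

theorem shatters_insert_of_shatters_memberSubfamily_inter_nonMemberSubfamily
    {a : α} {s : Finset α}
    (hs : (𝒜.memberSubfamily a ∩ 𝒜.nonMemberSubfamily a).Shatters s) :
    𝒜.Shatters (insert a s) := by
  intro t ht
  obtain ⟨u, hu, hut⟩ := hs (Finset.subset_insert_iff.1 ht)
  simp only [Finset.mem_inter, Finset.mem_memberSubfamily, Finset.mem_nonMemberSubfamily] at hu
  obtain ⟨⟨hinsert, hau⟩, hu𝒜, -⟩ := hu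
  by_cases hat : a ∈ t
  · exact ⟨insert a u, hinsert, by
      rw [← Finset.insert_inter_distrib, hut, Finset.insert_erase hat]⟩
  · exact ⟨u, hu𝒜, by
      rw [Finset.insert_inter_of_notMem hau, hut, Finset.erase_eq_of_notMem hat]⟩

theorem finset_vcDim_memberSubfamily_inter_nonMemberSubfamily_lt {a : α}
    (h : (𝒜.memberSubfamily a ∩ 𝒜.nonMemberSubfamily a).Nonempty) :
    (𝒜.memberSubfamily a ∩ 𝒜.nonMemberSubfamily a).vcDim < 𝒜.vcDim := by
  obtain ⟨s, hs, hcard⟩ := exists_shatters_card_eq_finset_vcDim h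
  have ha : a ∉ s := by
    obtain ⟨u, hu, hsu⟩ := hs.exists_superset
    exact fun has => (Finset.mem_memberSubfamily.1 (Finset.mem_inter.1 hu).1).2 (hsu has)
  rw [← hcard, Nat.lt_iff_add_one_le, ← Finset.card_insert_of_notMem ha]
  exact (shatters_insert_of_shatters_memberSubfamily_inter_nonMemberSubfamily hs).card_le_vcDim

theorem coe_finset_vcDim_le_vcDim {F : Set (Set α)} (h : ∀ s ∈ 𝒜, (s : Set α) ∈ F) :
    (𝒜.vcDim : ℕ∞) ≤ vcDim F := by
  obtain rfl | h𝒜 := 𝒜.eq_empty_or_nonempty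
  · simp [Finset.vcDim, Finset.shatterer]
  obtain ⟨s, hs, hcard⟩ := exists_shatters_card_eq_finset_vcDim h𝒜
  have hsF : Shatters F s := by
    intro t ht
    lift t to Finset α using s.finite_toSet.subset ht
    obtain ⟨u, hu, hut⟩ := hs (Finset.coe_subset.1 ht)
    exact ⟨u, h u hu, by rw [← hut, Finset.coe_inter]⟩
  rw [← hcard]
  exact le_iSup₂ (f := fun (s : Finset α) (_ : Shatters F s) => (#s : ℕ∞)) s hsF

end VCDimension

section EdgeWeight

variable {α : Type*} [DecidableEq α]

/-- The total weight of the edges in direction `i` of the cube of subsets of `T`, where `w` weighs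
the vertices and an edge weighs as much as its lighter endpoint. An edge `{v, insert i v}` is
represented by its endpoint `v` avoiding `i`. -/
def edgeWeight (w : Finset α → ℕ) (T : Finset α) (i : α) : ℕ :=
  ∑ v ∈ (T.erase i).powerset, min (w v) (w (insert i v))

theorem edgeWeight_insert_le (w : Finset α → ℕ) {T : Finset α} {a i : α} (ha : a ∉ T)
    (hi : i ∈ T) :
    edgeWeight w (insert a T) i ≤
      edgeWeight (fun v => max (w v) (w (insert a v))) T i +
        edgeWeight (fun v => min (w v) (w (insert a v))) T i := by
  have hai : a ≠ i := fun h => ha (h ▸ hi)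
  unfold edgeWeight
  rw [Finset.erase_insert_of_ne hai, Finset.sum_powerset_insert (by simp [ha]),
    ← Finset.sum_add_distrib, ← Finset.sum_add_distrib]
  refine Finset.sum_le_sum fun v _ => ?_
  dsimp only
  rw [Finset.insert_comm i a v]
  omega

theorem sum_powerset_insert_eq_sum_max_add_sum_min (w : Finset α → ℕ) {T : Finset α} {a : α}
    (ha : a ∉ T) :
    ∑ v ∈ (insert a T).powerset, w v =
      ∑ v ∈ T.powerset, max (w v) (w (insert a v)) +
        ∑ v ∈ T.powerset, min (w v) (w (insert a v)) := by
  rw [Finset.sum_powerset_insert ha, ← Finset.sum_add_distrib, ← Finset.sum_add_distrib]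
  exact Finset.sum_congr rfl fun v _ => (max_add_min _ _).symm

theorem filter_max_ne_zero_eq_union (w : Finset α → ℕ) {T : Finset α} {a : α} (ha : a ∉ T) :
    ({v ∈ T.powerset | max (w v) (w (insert a v)) ≠ 0} : Finset (Finset α)) =
      {v ∈ (insert a T).powerset | w v ≠ 0}.memberSubfamily a ∪
        {v ∈ (insert a T).powerset | w v ≠ 0}.nonMemberSubfamily a := by
  ext v
  simp only [Finset.mem_union, Finset.mem_memberSubfamily, Finset.mem_nonMemberSubfamily,
    Finset.mem_filter, Finset.mem_powerset]
  grind

theorem filter_min_ne_zero_eq_inter (w : Finset α → ℕ) {T : Finset α} {a : α} (ha : a ∉ T) :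
    ({v ∈ T.powerset | min (w v) (w (insert a v)) ≠ 0} : Finset (Finset α)) =
      {v ∈ (insert a T).powerset | w v ≠ 0}.memberSubfamily a ∩
        {v ∈ (insert a T).powerset | w v ≠ 0}.nonMemberSubfamily a := by
  ext v
  simp only [Finset.mem_inter, Finset.mem_memberSubfamily, Finset.mem_nonMemberSubfamily,
    Finset.mem_filter, Finset.mem_powerset]
  grind

theorem sum_edgeWeight_le (w : Finset α → ℕ) (T : Finset α) :
    ∑ i ∈ T, edgeWeight w T i ≤
      {v ∈ T.powerset | w v ≠ 0}.vcDim * ∑ v ∈ T.powerset, w v := by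
  induction T using Finset.induction_on generalizing w with
  | empty => simp
  | insert a T ha ih =>
    set d := {v ∈ (insert a T).powerset | w v ≠ 0}.vcDim
    set wMax : Finset α → ℕ := fun v => max (w v) (w (insert a v))
    set wMin : Finset α → ℕ := fun v => min (w v) (w (insert a v))
    have hMax : ∑ i ∈ T, edgeWeight wMax T i ≤ d * ∑ v ∈ T.powerset, wMax v := by
      refine (ih wMax).trans (Nat.mul_le_mul_right _ ?_)
      rw [filter_max_ne_zero_eq_union w ha]
      exact finset_vcDim_memberSubfamily_union_nonMemberSubfamily_le a
    have hMin : ∑ i ∈ T, edgeWeight wMin T i + ∑ v ∈ T.powerset, wMin v ≤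
        d * ∑ v ∈ T.powerset, wMin v := by
      refine (Nat.add_le_add_right (ih wMin) _).trans ?_
      obtain hempty | hne := {v ∈ T.powerset | wMin v ≠ 0}.eq_empty_or_nonempty
      · have hzero : ∑ v ∈ T.powerset, wMin v = 0 :=
          Finset.sum_eq_zero fun v hv => not_not.1 (Finset.filter_eq_empty_iff.1 hempty hv)
        simp [hzero]
      · rw [← Nat.succ_mul]
        refine Nat.mul_le_mul_right _ ?_
        rw [filter_min_ne_zero_eq_inter w ha] at hne ⊢
        exact finset_vcDim_memberSubfamily_inter_nonMemberSubfamily_lt hne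
    have hOther : ∑ i ∈ T, edgeWeight w (insert a T) i ≤
        ∑ i ∈ T, edgeWeight wMax T i + ∑ i ∈ T, edgeWeight wMin T i := by
      rw [← Finset.sum_add_distrib]
      exact Finset.sum_le_sum fun i hi => edgeWeight_insert_le w ha hi
    have hSelf : edgeWeight w (insert a T) a = ∑ v ∈ T.powerset, wMin v := by
      rw [edgeWeight, Finset.erase_insert ha]
    have hTotal : ∑ v ∈ (insert a T).powerset, w v =
        ∑ v ∈ T.powerset, wMax v + ∑ v ∈ T.powerset, wMin v :=
      sum_powerset_insert_eq_sum_max_add_sum_min w ha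
    rw [Finset.sum_insert ha, hSelf, hTotal, mul_add]
    linarith

end EdgeWeight

section SeparatedFamily

variable {α : Type*} [DecidableEq α] {𝒜 : Finset (Finset α)} {X : Finset α}

theorem sum_sum_card_sdiff (h𝒜 : ∀ s ∈ 𝒜, s ⊆ X) :
    ∑ s ∈ 𝒜, ∑ t ∈ 𝒜, #(s \ t) = ∑ z ∈ X, #{s ∈ 𝒜 | z ∉ s} * #{s ∈ 𝒜 | z ∈ s} := by
  have hsdiff : ∀ s ∈ 𝒜, ∀ t, #(s \ t) = ∑ z ∈ X, if z ∉ t ∧ z ∈ s then 1 else 0 := by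
    intro s hs t
    rw [← Finset.card_filter]
    congr 1
    grind [h𝒜 s hs]
  have hmul : ∀ z, #{s ∈ 𝒜 | z ∉ s} * #{s ∈ 𝒜 | z ∈ s} =
      ∑ t ∈ 𝒜, ∑ s ∈ 𝒜, if z ∉ t ∧ z ∈ s then 1 else 0 := by
    intro z
    simp only [Finset.card_filter, Finset.sum_mul_sum, ite_and, ite_mul, one_mul, zero_mul]
  calc ∑ s ∈ 𝒜, ∑ t ∈ 𝒜, #(s \ t)
      = ∑ s ∈ 𝒜, ∑ t ∈ 𝒜, ∑ z ∈ X, if z ∉ t ∧ z ∈ s then 1 else 0 :=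
        Finset.sum_congr rfl fun s hs => Finset.sum_congr rfl fun t _ => hsdiff s hs t
    _ = ∑ t ∈ 𝒜, ∑ z ∈ X, ∑ s ∈ 𝒜, if z ∉ t ∧ z ∈ s then 1 else 0 := by
        rw [Finset.sum_comm]
        exact Finset.sum_congr rfl fun t _ => Finset.sum_comm
    _ = ∑ z ∈ X, #{s ∈ 𝒜 | z ∉ s} * #{s ∈ 𝒜 | z ∈ s} := by
        rw [Finset.sum_comm]
        exact Finset.sum_congr rfl fun z _ => (hmul z).symm

theorem sum_sum_card_symmDiff (h𝒜 : ∀ s ∈ 𝒜, s ⊆ X) :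
    ∑ s ∈ 𝒜, ∑ t ∈ 𝒜, #(s ∆ t) = 2 * ∑ z ∈ X, #{s ∈ 𝒜 | z ∉ s} * #{s ∈ 𝒜 | z ∈ s} := by
  have hsplit : ∀ s t : Finset α, #(s ∆ t) = #(s \ t) + #(t \ s) := fun s t =>
    Finset.card_union_of_disjoint disjoint_sdiff_sdiff
  simp only [hsplit, Finset.sum_add_distrib]
  rw [Finset.sum_comm (f := fun s t => #(t \ s)), sum_sum_card_sdiff h𝒜, two_mul]

theorem card_filter_notMem_mul_card_filter_mem_le (z : α) :
    #{s ∈ 𝒜 | z ∉ s} * #{s ∈ 𝒜 | z ∈ s} ≤ #𝒜 * min #{s ∈ 𝒜 | z ∉ s} #{s ∈ 𝒜 | z ∈ s} := by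
  rw [← max_mul_min]
  exact Nat.mul_le_mul_right _ (max_le (Finset.card_filter_le _ _) (Finset.card_filter_le _ _))

theorem separation_mul_card_sub_one_le (h𝒜 : ∀ s ∈ 𝒜, s ⊆ X) (hne : 𝒜.Nonempty) {D : ℝ}
    (hsep : (𝒜 : Set (Finset α)).Pairwise fun s t => D ≤ #(s ∆ t)) :
    D * (#𝒜 - 1) ≤ 2 * ∑ z ∈ X, (min #{s ∈ 𝒜 | z ∉ s} #{s ∈ 𝒜 | z ∈ s} : ℕ) := by
  have hlower : #𝒜 * (D * (#𝒜 - 1)) ≤ ((∑ s ∈ 𝒜, ∑ t ∈ 𝒜, #(s ∆ t) : ℕ) : ℝ) := by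
    push_cast
    rw [← nsmul_eq_mul]
    refine Finset.card_nsmul_le_sum _ _ _ fun s hs => ?_
    rw [← Finset.add_sum_erase _ _ hs, symmDiff_self, Finset.bot_eq_empty, Finset.card_empty,
      Nat.cast_zero, zero_add, mul_comm, ← Finset.cast_card_erase_of_mem hs, ← nsmul_eq_mul]
    exact Finset.card_nsmul_le_sum _ _ _ fun t ht =>
      hsep hs (Finset.mem_of_mem_erase ht) (Finset.ne_of_mem_erase ht).symm
  have hupper : ∑ s ∈ 𝒜, ∑ t ∈ 𝒜, #(s ∆ t) ≤
      #𝒜 * (2 * ∑ z ∈ X, min #{s ∈ 𝒜 | z ∉ s} #{s ∈ 𝒜 | z ∈ s}) := by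
    rw [sum_sum_card_symmDiff h𝒜, mul_left_comm, Finset.mul_sum (a := #𝒜)]
    exact Nat.mul_le_mul_left _ (Finset.sum_le_sum fun z _ =>
      card_filter_notMem_mul_card_filter_mem_le (𝒜 := 𝒜) z)
  refine le_of_mul_le_mul_left (hlower.trans ?_) (Nat.cast_pos.2 hne.card_pos)
  exact_mod_cast hupper

end SeparatedFamily

theorem sum_piFinset_sum_update {α ι M : Type*} [Fintype ι] [DecidableEq ι] [AddCommMonoid M]
    (X : Finset α) (i : ι) (F : (ι → α) → M) :
    ∑ x ∈ Fintype.piFinset (fun _ : ι => X), ∑ z ∈ X, F (Function.update x i z) =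
      #X • ∑ x ∈ Fintype.piFinset (fun _ : ι => X), F x := by
  let swap (p : (ι → α) × α) : (ι → α) × α := (Function.update p.1 i p.2, p.1 i)
  have hswap : ∀ p ∈ Fintype.piFinset (fun _ : ι => X) ×ˢ X,
      swap p ∈ Fintype.piFinset (fun _ : ι => X) ×ˢ X := by
    rintro ⟨x, z⟩ hp
    rw [Finset.mem_product, Fintype.mem_piFinset] at hp ⊢
    refine ⟨fun j => ?_, hp.1 i⟩
    by_cases hj : j = i
    · simpa [swap, hj] using hp.2
    · simpa [swap, hj] using hp.1 j
  rw [← Finset.sum_nsmul, Finset.sum_congr rfl fun x _ => (Finset.sum_const (F x)).symm,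
    ← Finset.sum_product', ← Finset.sum_product']
  exact Finset.sum_nbij' swap swap hswap hswap (fun p _ => by simp [swap])
    (fun p _ => by simp [swap]) (fun _ _ => rfl)

section Sampling

variable {α ι : Type*} [DecidableEq α] [Fintype ι] {𝒜 : Finset (Finset α)} {X : Finset α}
  (x : ι → α)

/-- The trace of the set `s` on the sample `x`, as the set of indices of the sample points in `s`.
Recording indices rather than points lets `x` be drawn with repetitions. -/
def sampleTrace (s : Finset α) : Finset ι :=
  {j | x j ∈ s}

theorem mem_sampleTrace {s : Finset α} {j : ι} : j ∈ sampleTrace x s ↔ x j ∈ s := by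
  simp [sampleTrace]

variable [DecidableEq ι]

/-- The number of members of the family `𝒜` whose trace on the sample `x` is `v`. -/
def traceWeight (𝒜 : Finset (Finset α)) (v : Finset ι) : ℕ :=
  #{s ∈ 𝒜 | sampleTrace x s = v}

theorem injOn_of_shatters_image_sampleTrace {S : Finset ι}
    (hS : (𝒜.image (sampleTrace x)).Shatters S) : Set.InjOn x S := by
  intro j hj k hk hjk
  obtain ⟨_, hv, hsingleton⟩ := hS (Finset.singleton_subset_iff.2 hj)
  obtain ⟨s, -, rfl⟩ := Finset.mem_image.1 hv
  have hjs : j ∈ S ∩ sampleTrace x s := hsingleton ▸ Finset.mem_singleton_self j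
  have hks : k ∈ S ∩ sampleTrace x s := by
    rw [Finset.mem_inter, mem_sampleTrace] at hjs ⊢
    exact ⟨hk, hjk ▸ hjs.2⟩
  rw [hsingleton, Finset.mem_singleton] at hks
  exact hks.symm

theorem shatters_image_of_shatters_image_sampleTrace {S : Finset ι}
    (hS : (𝒜.image (sampleTrace x)).Shatters S) : 𝒜.Shatters (S.image x) := by
  intro T hT
  obtain ⟨_, hv, htrace⟩ := hS (Finset.filter_subset (fun j => x j ∈ T) S)
  obtain ⟨s, hs, rfl⟩ := Finset.mem_image.1 hv
  have hiff : ∀ j ∈ S, x j ∈ s ↔ x j ∈ T := fun j hj => by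
    simpa [hj, mem_sampleTrace] using congrArg (j ∈ ·) htrace
  refine ⟨s, hs, Finset.ext fun z => ⟨fun hz => ?_, fun hz => ?_⟩⟩
  · obtain ⟨hzS, hzs⟩ := Finset.mem_inter.1 hz
    obtain ⟨j, hj, rfl⟩ := Finset.mem_image.1 hzS
    exact (hiff j hj).1 hzs
  · obtain ⟨j, hj, rfl⟩ := Finset.mem_image.1 (hT hz)
    exact Finset.mem_inter.2 ⟨hT hz, (hiff j hj).2 hz⟩

theorem finset_vcDim_image_sampleTrace_le : (𝒜.image (sampleTrace x)).vcDim ≤ 𝒜.vcDim := by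
  refine finset_vcDim_le_of_forall_shatters fun S hS => ?_
  rw [← Finset.card_image_of_injOn (injOn_of_shatters_image_sampleTrace x hS)]
  exact (shatters_image_of_shatters_image_sampleTrace x hS).card_le_vcDim

theorem card_image_sampleTrace_le :
    #(𝒜.image (sampleTrace x)) ≤ ∑ k ∈ Finset.Iic 𝒜.vcDim, (Fintype.card ι).choose k :=
  card_le_sum_choose_finset_vcDim.trans <|
    Finset.sum_le_sum_of_subset (Finset.Iic_subset_Iic.2 (finset_vcDim_image_sampleTrace_le x))

theorem filter_traceWeight_ne_zero :
    ({v ∈ Finset.univ.powerset | traceWeight x 𝒜 v ≠ 0} : Finset (Finset ι)) =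
      𝒜.image (sampleTrace x) := by
  ext v
  simp [traceWeight, Finset.filter_eq_empty_iff]

theorem sum_edgeWeight_traceWeight_le :
    ∑ i, edgeWeight (traceWeight x 𝒜) Finset.univ i ≤ 𝒜.vcDim * #𝒜 := by
  have hTotal : ∑ v ∈ Finset.univ.powerset, traceWeight x 𝒜 v = #𝒜 :=
    (Finset.card_eq_sum_card_fiberwise fun s _ =>
      Finset.mem_coe.2 (Finset.mem_powerset.2 (Finset.subset_univ _))).symm
  calc ∑ i, edgeWeight (traceWeight x 𝒜) Finset.univ i
      ≤ (𝒜.image (sampleTrace x)).vcDim * #𝒜 := by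
        simpa only [filter_traceWeight_ne_zero, hTotal] using
          sum_edgeWeight_le (traceWeight x 𝒜) Finset.univ
    _ ≤ 𝒜.vcDim * #𝒜 := Nat.mul_le_mul_right _ (finset_vcDim_image_sampleTrace_le x)

theorem mem_sampleTrace_update_self {s : Finset α} {i : ι} {z : α} :
    i ∈ sampleTrace (Function.update x i z) s ↔ z ∈ s := by
  rw [mem_sampleTrace, Function.update_self]

theorem sampleTrace_update_erase (s : Finset α) (i : ι) (z : α) :
    (sampleTrace (Function.update x i z) s).erase i = (sampleTrace x s).erase i := by
  ext j
  by_cases hj : j = i <;> simp [hj, mem_sampleTrace]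

theorem traceWeight_update {i : ι} {v : Finset ι} (hv : i ∉ v) (z : α) :
    traceWeight (Function.update x i z) 𝒜 v =
      #{s ∈ 𝒜.filter (fun s => (sampleTrace x s).erase i = v) | z ∉ s} := by
  rw [traceWeight, Finset.filter_filter]
  congr! 2 with s
  rw [← sampleTrace_update_erase x s i z, ← mem_sampleTrace_update_self x (i := i)]
  grind

theorem traceWeight_update_insert {i : ι} {v : Finset ι} (hv : i ∉ v) (z : α) :
    traceWeight (Function.update x i z) 𝒜 (insert i v) =
      #{s ∈ 𝒜.filter (fun s => (sampleTrace x s).erase i = v) | z ∈ s} := by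
  rw [traceWeight, Finset.filter_filter]
  congr! 2 with s
  rw [← sampleTrace_update_erase x s i z, ← mem_sampleTrace_update_self x (i := i)]
  grind

theorem card_image_sampleTrace_erase_le (i : ι) :
    #(𝒜.image fun s => (sampleTrace x s).erase i) ≤
      ∑ k ∈ Finset.Iic 𝒜.vcDim, (Fintype.card ι).choose k := by
  rw [show (fun s => (sampleTrace x s).erase i) = (Finset.erase · i) ∘ sampleTrace x from rfl,
    ← Finset.image_image]
  exact Finset.card_image_le.trans (card_image_sampleTrace_le x)

theorem separation_mul_card_sub_card_image_le (h𝒜 : ∀ s ∈ 𝒜, s ⊆ X) {D : ℝ}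
    (hsep : (𝒜 : Set (Finset α)).Pairwise fun s t => D ≤ #(s ∆ t)) (i : ι) :
    D * (#𝒜 - #(𝒜.image fun s => (sampleTrace x s).erase i)) ≤
      2 * (∑ z ∈ X, edgeWeight (traceWeight (Function.update x i z) 𝒜) Finset.univ i : ℕ) := by
  set C := 𝒜.image fun s => (sampleTrace x s).erase i
  let fiber (v : Finset ι) : Finset (Finset α) := {s ∈ 𝒜 | (sampleTrace x s).erase i = v}
  have hC : ∀ v ∈ C, i ∉ v := by
    intro v hv
    obtain ⟨s, -, rfl⟩ := Finset.mem_image.1 hv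
    exact Finset.notMem_erase i _
  have hfiber : ∀ v ∈ C, D * (#(fiber v) - 1) ≤
      2 * (∑ z ∈ X, min #{s ∈ fiber v | z ∉ s} #{s ∈ fiber v | z ∈ s} : ℕ) := by
    intro v hv
    refine separation_mul_card_sub_one_le (fun s hs => h𝒜 s (Finset.mem_of_mem_filter s hs)) ?_
      (hsep.mono (Finset.coe_subset.2 (Finset.filter_subset _ _)))
    obtain ⟨s, hs, hsv⟩ := Finset.mem_image.1 hv
    exact ⟨s, Finset.mem_filter.2 ⟨hs, hsv⟩⟩
  have hedge : ∀ z, ∑ v ∈ C, min #{s ∈ fiber v | z ∉ s} #{s ∈ fiber v | z ∈ s} ≤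
      edgeWeight (traceWeight (Function.update x i z) 𝒜) Finset.univ i := by
    intro z
    calc ∑ v ∈ C, min #{s ∈ fiber v | z ∉ s} #{s ∈ fiber v | z ∈ s}
        = ∑ v ∈ C, min (traceWeight (Function.update x i z) 𝒜 v)
            (traceWeight (Function.update x i z) 𝒜 (insert i v)) :=
          Finset.sum_congr rfl fun v hv => by
            rw [traceWeight_update x (hC v hv), traceWeight_update_insert x (hC v hv)]
      _ ≤ edgeWeight (traceWeight (Function.update x i z) 𝒜) Finset.univ i :=
          Finset.sum_le_sum_of_subset fun v hv => by simp [Finset.subset_erase, hC v hv]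
  calc D * (#𝒜 - #C) = ∑ v ∈ C, D * (#(fiber v) - 1) := by
        rw [← Finset.mul_sum, Finset.sum_sub_distrib, ← Nat.cast_sum,
          ← Finset.card_eq_sum_card_image]
        simp
    _ ≤ ∑ v ∈ C, 2 * ((∑ z ∈ X, min #{s ∈ fiber v | z ∉ s} #{s ∈ fiber v | z ∈ s} : ℕ) : ℝ) :=
        Finset.sum_le_sum hfiber
    _ = 2 * ((∑ z ∈ X, ∑ v ∈ C, min #{s ∈ fiber v | z ∉ s} #{s ∈ fiber v | z ∈ s} : ℕ) : ℝ) := by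
        rw [← Finset.mul_sum, ← Nat.cast_sum, Finset.sum_comm]
    _ ≤ _ := by
        gcongr with z
        exact hedge z

theorem mul_separation_mul_card_sub_sum_choose_le (h𝒜 : ∀ s ∈ 𝒜, s ⊆ X) (hX : X.Nonempty) {D : ℝ}
    (hD : 0 ≤ D) (hsep : (𝒜 : Set (Finset α)).Pairwise fun s t => D ≤ #(s ∆ t)) (n : ℕ) :
    n * (D * (#𝒜 - (∑ k ∈ Finset.Iic 𝒜.vcDim, n.choose k : ℕ))) ≤
      2 * #X * (𝒜.vcDim * #𝒜) := by
  set Φ := ∑ k ∈ Finset.Iic 𝒜.vcDim, n.choose k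
  set Ω := Fintype.piFinset fun _ : Fin n => X
  let cost (i : Fin n) (x : Fin n → α) : ℕ := edgeWeight (traceWeight x 𝒜) Finset.univ i
  have hlower : ∀ i, ∀ x ∈ Ω,
      D * (#𝒜 - Φ) ≤ 2 * (∑ z ∈ X, cost i (Function.update x i z) : ℕ) := by
    intro i x _
    refine le_trans ?_ (separation_mul_card_sub_card_image_le x h𝒜 hsep i)
    have hclasses := card_image_sampleTrace_erase_le (𝒜 := 𝒜) x i
    rw [Fintype.card_fin] at hclasses
    gcongr
  have hpos : (0 : ℝ) < #Ω := by
    exact_mod_cast (Fintype.piFinset_nonempty.2 fun _ => hX).card_pos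
  refine le_of_mul_le_mul_left ?_ hpos
  calc (#Ω : ℝ) * (n * (D * (#𝒜 - Φ)))
      = ∑ _i : Fin n, ∑ _x ∈ Ω, D * (#𝒜 - Φ) := by
        simp only [Finset.sum_const, nsmul_eq_mul, Finset.card_univ, Fintype.card_fin]
        ring
    _ ≤ ∑ i, ∑ x ∈ Ω, 2 * ((∑ z ∈ X, cost i (Function.update x i z) : ℕ) : ℝ) :=
        Finset.sum_le_sum fun i _ => Finset.sum_le_sum (hlower i)
    _ = 2 * ((∑ i, ∑ x ∈ Ω, ∑ z ∈ X, cost i (Function.update x i z) : ℕ) : ℝ) := by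
        push_cast
        simp only [Finset.mul_sum]
    _ = 2 * #X * ((∑ x ∈ Ω, ∑ i, cost i x : ℕ) : ℝ) := by
        simp only [Ω, sum_piFinset_sum_update, ← Finset.smul_sum]
        rw [Finset.sum_comm]
        push_cast [smul_eq_mul]
        ring
    _ ≤ 2 * #X * (#Ω * (𝒜.vcDim * #𝒜)) := by
        gcongr
        exact_mod_cast Finset.sum_le_card_nsmul Ω _ _ fun x _ =>
          sum_edgeWeight_traceWeight_le x
    _ = #Ω * (2 * #X * (𝒜.vcDim * #𝒜)) := by ring

end Sampling

section Packing

theorem sum_choose_mul_pow_le_exp (n d : ℕ) {t : ℝ} (ht0 : 0 ≤ t) (ht1 : t ≤ 1) :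
    ((∑ k ∈ Finset.Iic d, n.choose k : ℕ) : ℝ) * t ^ d ≤ Real.exp (n * t) := by
  calc ((∑ k ∈ Finset.Iic d, n.choose k : ℕ) : ℝ) * t ^ d
      ≤ ∑ k ∈ Finset.Iic d, n.choose k * t ^ k := by
        rw [Nat.cast_sum, Finset.sum_mul]
        exact Finset.sum_le_sum fun k hk => mul_le_mul_of_nonneg_left
          (pow_le_pow_of_le_one ht0 ht1 (Finset.mem_Iic.1 hk)) (Nat.cast_nonneg _)
    _ ≤ ∑ k ∈ Finset.range (n + 1), n.choose k * t ^ k := by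
        rw [← Finset.sum_filter_ne_zero]
        refine Finset.sum_le_sum_of_subset_of_nonneg (fun k hk => ?_) fun _ _ _ => by positivity
        have hchoose : n.choose k ≠ 0 := fun h => (Finset.mem_filter.1 hk).2 (by simp [h])
        exact Finset.mem_range_succ_iff.2 (Nat.choose_ne_zero_iff.1 hchoose)
    _ = (t + 1) ^ n := by
        rw [add_pow]
        exact Finset.sum_congr rfl fun k _ => by ring
    _ ≤ Real.exp t ^ n := by
        gcongr
        exact Real.add_one_le_exp t
    _ = Real.exp (n * t) := (Real.exp_nat_mul t n).symm

theorem succ_mul_sum_choose_le_pow (n d : ℕ) {ε : ℝ} (hε0 : 0 < ε) (hε1 : ε ≤ 1)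
    (hn : n * ε ≤ 2 * (d + 1) + ε) :
    (d + 1) * ((∑ k ∈ Finset.Iic d, n.choose k : ℕ) : ℝ) ≤ (30 / ε) ^ d := by
  obtain rfl | hd := d.eq_zero_or_pos
  · simp [show Finset.Iic (0 : ℕ) = {0} from Finset.Iic_bot]
  -- The binomial bound is sharpest at `t = d / n`, and `n` is of order `d / ε`.
  have hchoose : ((∑ k ∈ Finset.Iic d, n.choose k : ℕ) : ℝ) * (ε / 5) ^ d ≤ 3 ^ d :=
    calc _ ≤ Real.exp (n * (ε / 5)) :=
          sum_choose_mul_pow_le_exp n d (by positivity) (by linarith)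
      _ ≤ Real.exp (d * 1) := by
          have hd1 : (1 : ℝ) ≤ d := Nat.one_le_cast.2 hd
          exact Real.exp_le_exp.2 (by linarith)
      _ = Real.exp 1 ^ d := Real.exp_nat_mul 1 d
      _ ≤ 3 ^ d := by
          gcongr
          exact Real.exp_one_lt_three.le
  have hsucc : (d + 1 : ℝ) ≤ 2 ^ d := mod_cast d.lt_two_pow_self
  calc (d + 1) * ((∑ k ∈ Finset.Iic d, n.choose k : ℕ) : ℝ)
      ≤ 2 ^ d * (3 ^ d / (ε / 5) ^ d) := by
        gcongr
        exact (le_div_iff₀ (by positivity)).2 hchoose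
    _ = (30 / ε) ^ d := by
        rw [← div_pow, ← mul_pow]
        congr 1
        field_simp
        norm_num

variable {α : Type*} [DecidableEq α] {𝒜 : Finset (Finset α)} {X : Finset α} {ε : ℝ}

theorem card_le_succ_vcDim_mul_sum_choose (h𝒜 : ∀ s ∈ 𝒜, s ⊆ X) (hX : X.Nonempty) (hε : 0 ≤ ε)
    (hsep : (𝒜 : Set (Finset α)).Pairwise fun s t => ε * #X ≤ #(s ∆ t)) {n : ℕ}
    (hn : 2 * (𝒜.vcDim + 1) ≤ n * ε) :
    (#𝒜 : ℝ) ≤ (𝒜.vcDim + 1) * (∑ k ∈ Finset.Iic 𝒜.vcDim, n.choose k : ℕ) := by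
  set Φ := ∑ k ∈ Finset.Iic 𝒜.vcDim, n.choose k
  have hXpos : (0 : ℝ) < #X := Nat.cast_pos.2 hX.card_pos
  have hcount : n * ε * (#𝒜 - Φ) ≤ 2 * (𝒜.vcDim * #𝒜) := by
    refine le_of_mul_le_mul_left ?_ hXpos
    linarith [mul_separation_mul_card_sub_sum_choose_le h𝒜 hX (by positivity) hsep n]
  obtain hle | hle := le_total (#𝒜 : ℝ) Φ
  · nlinarith [Nat.cast_nonneg (α := ℝ) 𝒜.vcDim, Nat.cast_nonneg (α := ℝ) Φ]
  · linarith [mul_le_mul_of_nonneg_right hn (sub_nonneg.2 hle)]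

theorem haussler_packing (h𝒜 : ∀ s ∈ 𝒜, s ⊆ X) (hX : X.Nonempty) (hε0 : 0 < ε) (hε1 : ε ≤ 1)
    (hsep : (𝒜 : Set (Finset α)).Pairwise fun s t => ε * #X ≤ #(s ∆ t)) :
    (#𝒜 : ℝ) ≤ (30 / ε) ^ 𝒜.vcDim := by
  set n := ⌈2 * (𝒜.vcDim + 1) / ε⌉₊
  have hlower : 2 * (𝒜.vcDim + 1) ≤ n * ε := (div_le_iff₀ hε0).1 (Nat.le_ceil _)
  have hupper : n * ε ≤ 2 * (𝒜.vcDim + 1) + ε := by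
    have hceil := (Nat.ceil_lt_add_one (a := 2 * (𝒜.vcDim + 1) / ε) (by positivity)).le
    calc n * ε ≤ (2 * (𝒜.vcDim + 1) / ε + 1) * ε := by gcongr
      _ = 2 * (𝒜.vcDim + 1) + ε := by field_simp
  exact (card_le_succ_vcDim_mul_sum_choose h𝒜 hX hε0.le hsep hlower).trans
    (succ_mul_sum_choose_le_pow n _ hε0 hε1 hupper)

end Packing

section Stabilizer

variable {G : Type*} [Group G] {A B E S : Set G} {N : ℝ}

theorem one_mem_stabL (hN : 0 ≤ N) : 1 ∈ stabL A N := by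
  simpa [stabL] using hN

theorem ncard_inv_mul_smul_symmDiff (A : Set G) (a b : G) :
    (((a⁻¹ * b) • A) ∆ A).ncard = ((a • A) ∆ (b • A)).ncard := by
  rw [symmDiff_comm, ← Set.ncard_smul_set a, Set.smul_set_symmDiff, smul_smul,
    mul_inv_cancel_left]

theorem inv_mul_mem_stabL {a b : G} :
    a⁻¹ * b ∈ stabL A N ↔ (((a • A) ∆ (b • A)).ncard : ℝ) ≤ N := by
  rw [← ncard_inv_mul_smul_symmDiff]
  rfl

theorem inv_mem_stabL {a : G} (ha : a ∈ stabL A N) : a⁻¹ ∈ stabL A N := by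
  have h := inv_mul_mem_stabL (A := A) (N := N) (a := a) (b := 1)
  rw [mul_one, one_smul] at h
  exact h.2 ha

theorem exists_pairwise_inv_mul_notMem_subset_mul (hB : B.Finite) (hone : 1 ∈ S)
    (hinv : ∀ a ∈ S, a⁻¹ ∈ S) :
    ∃ E ⊆ B, E.Pairwise (fun a b => a⁻¹ * b ∉ S) ∧ B ⊆ E * (S ∩ (B⁻¹ * B)) := by
  let U : SetRel G G := {p | p.1⁻¹ * p.2 ∈ S}
  have : U.IsRefl := ⟨fun a => by simpa [U] using hone⟩
  have : U.IsSymm := ⟨fun a b h => by simpa [U] using hinv _ h⟩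
  obtain ⟨E, hE⟩ : ∃ E, Maximal (fun E => E ⊆ B ∧ U.IsSeparated E) E :=
    (hB.finite_subsets.subset fun E hE => hE.1).exists_maximal
      ⟨∅, Set.empty_subset B, Set.pairwise_empty _⟩
  refine ⟨E, hE.prop.1, hE.prop.2, fun b hb => ?_⟩
  obtain ⟨e, he, hbe⟩ := SetRel.IsCover.of_maximal_isSeparated hE hb
  refine Set.mem_mul.2 ⟨e, he, e⁻¹ * b, ⟨?_, ?_⟩, mul_inv_cancel_left e b⟩
  · exact U.symm hbe
  · exact Set.mul_mem_mul (Set.inv_mem_inv.2 (hE.prop.1 he)) hb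

theorem ncard_le_of_pairwise_inv_mul_notMem_stabL (hA : A.Finite) (hB : B.Finite)
    (hBA : (B * A).Nonempty) (hEB : E ⊆ B)
    (hE : E.Pairwise fun a b => a⁻¹ * b ∉ stabL A N) {ε : ℝ} (hε0 : 0 < ε) (hε1 : ε ≤ 1)
    (hεN : ε * (B * A).ncard ≤ N) {d : ℕ} (hd : vcDim (leftFam A B) ≤ d) :
    (E.ncard : ℝ) ≤ (30 / ε) ^ d := by
  classical
  have hN : 0 ≤ N := (by positivity : 0 ≤ ε * (B * A).ncard).trans hεN
  lift E to Finset G using hB.subset hEB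
  lift A to Finset G using hA
  lift B to Finset G using hB
  rw [← Finset.coe_mul, Set.ncard_coe_finset] at hεN
  rw [← Finset.coe_mul, Finset.coe_nonempty] at hBA
  rw [Finset.coe_subset] at hEB
  have hsep : ∀ a ∈ E, ∀ b ∈ E, a ≠ b → N < #((a • A) ∆ (b • A)) := by
    intro a ha b hb hab
    have h : a⁻¹ * b ∉ stabL (A : Set G) N := hE ha hb hab
    rwa [inv_mul_mem_stabL, not_le, ← Finset.coe_smul_finset, ← Finset.coe_smul_finset,
      ← Finset.coe_symmDiff, Set.ncard_coe_finset] at h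
  have hinj : Set.InjOn (· • A) (E : Set G) := by
    intro a ha b hb hab
    by_contra hne
    have h := hsep a ha b hb hne
    rw [show a • A = b • A from hab, symmDiff_self, Finset.bot_eq_empty, Finset.card_empty,
      Nat.cast_zero] at h
    exact h.not_ge hN
  set 𝒜 := E.image (· • A)
  have hpack : (#𝒜 : ℝ) ≤ (30 / ε) ^ 𝒜.vcDim := by
    refine haussler_packing (X := B * A) (Finset.forall_mem_image.2 fun a ha =>
      Finset.smul_finset_subset_mul (hEB ha)) hBA hε0 hε1 ?_
    rw [Finset.coe_image, hinj.pairwise_image]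
    exact fun a ha b hb hab => hεN.trans (hsep a ha b hb hab).le
  have hvc : 𝒜.vcDim ≤ d := by
    refine Nat.cast_le.1 ((coe_finset_vcDim_le_vcDim ?_).trans hd)
    exact Finset.forall_mem_image.2 fun a ha => ⟨a, hEB ha, (Finset.coe_smul_finset a A).symm⟩
  rw [Set.ncard_coe_finset, ← Finset.card_image_of_injOn hinj]
  refine hpack.trans (pow_le_pow_right₀ ?_ hvc)
  rw [one_le_div hε0]
  linarith

end Stabilizer

end HausslerPacking

/-- Haussler packing bound for covering `B` by translates of
`Stab^ℓ_N(A) ∩ B⁻¹B` (Proposition 2.10(a) of the paper). -/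
theorem cov_stabL {G : Type*} [Group G] (A B : Set G)
    (hA : A.Finite) (hAne : A.Nonempty) (hB : B.Finite) (hBne : B.Nonempty)
    (N : ℝ) (hN : 0 < N) (ε : ℝ) (hε0 : 0 < ε) (hε1 : ε < 1)
    (d : ℕ) (hd : vcDim (leftFam A B) = (d : ℕ∞))
    (hεN : ε ≤ N / ((B * A).ncard : ℝ)) :
    ∃ E ⊆ B, E.Finite ∧ (E.ncard : ℝ) ≤ (30 / ε) ^ d ∧
      B ⊆ E * (stabL A N ∩ (B⁻¹ * B)) := by
  obtain ⟨E, hEB, hEsep, hcover⟩ := exists_pairwise_inv_mul_notMem_subset_mul hB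
    (one_mem_stabL hN.le) fun _ => inv_mem_stabL (A := A)
  have hBA : (B * A).Nonempty := hBne.mul hAne
  have hBAcard : (0 : ℝ) < (B * A).ncard := Nat.cast_pos.2 (hBA.ncard_pos (hB.mul hA))
  exact ⟨E, hEB, hB.subset hEB, ncard_le_of_pairwise_inv_mul_notMem_stabL hA hB hBA hEB hEsep
    hε0 hε1.le ((le_div_iff₀ hBAcard).1 hεN) hd.le, hcover⟩
end

section
/- Let G be a group and A ⊆ G a nonempty finite set. The following are equivalent: (i) VC^ℓ_{A⁻¹}(A) = 0; (ii) VC^r_{A⁻¹}(A) = 0; (iii) |AA⁻¹| = |A|; (iv) |A⁻¹A| = |A|; (v) A is a coset of a subgroup of G, i.e., there is a subgroup H ≤ G and a ∈ G with A = aH. -/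
open scoped Pointwise symmDiff

/-!
The union of the translates `Ax` (`x ∈ B`) is `AB`, and each of them has `|A|` elements, so for
finite `AB` we have `|AB| = |A|` exactly when all these translates coincide; symmetrically for the
left translates. A set system has VC-dimension `0` exactly when it has at most one member. With
`B = A⁻¹`, each of the four conditions on VC-dimensions and cardinalities therefore says that all
left, or all right, translates of `A` by elements of `A⁻¹` coincide. Either of these unfolds to
`xy⁻¹z ∈ A` for all `x, y, z ∈ A`, and then the translate `a⁻¹A` with `a ∈ A` is a subgroup.
-/

section SetSystem

variable {α : Type*} {F : Set (Set α)}

lemma shatters_singleton_iff {x : α} :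
    Shatters F {x} ↔ (∃ s ∈ F, x ∉ s) ∧ ∃ s ∈ F, x ∈ s := by
  simp only [Shatters, Set.subset_singleton_iff_eq, forall_eq_or_imp, forall_eq,
    Set.singleton_inter_eq_empty, Set.inter_eq_left, Set.singleton_subset_iff]

lemma Shatters.mono_right {S T : Set α} (hTS : T ⊆ S) (hS : Shatters F S) : Shatters F T := by
  intro U hUT
  obtain ⟨s, hs, hSs⟩ := hS U (hUT.trans hTS)
  refine ⟨s, hs, ?_⟩
  rw [← Set.inter_eq_left.2 hTS, Set.inter_assoc, hSs, Set.inter_eq_right.2 hUT]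

lemma vcDim_eq_zero_iff_forall_not_shatters_singleton :
    vcDim F = 0 ↔ ∀ x, ¬ Shatters F {x} := by
  simp only [vcDim, ENat.iSup_eq_zero, Nat.cast_eq_zero, Finset.card_eq_zero]
  constructor
  · intro h x hx
    exact Finset.singleton_ne_empty x (h {x} (by rwa [Finset.coe_singleton]))
  · intro h S hS
    refine Finset.eq_empty_of_forall_notMem fun x hx => h x (.mono_right ?_ hS)
    exact Set.singleton_subset_iff.2 hx

lemma vcDim_eq_zero_iff_subsingleton : vcDim F = 0 ↔ F.Subsingleton := by
  simp only [vcDim_eq_zero_iff_forall_not_shatters_singleton, shatters_singleton_iff]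
  constructor
  · intro h s hs t ht
    have subset_of_mem : ∀ s ∈ F, ∀ t ∈ F, s ⊆ t := by
      intro s hs t ht x hxs
      by_contra hxt
      exact h x ⟨⟨t, ht, hxt⟩, s, hs, hxs⟩
    exact (subset_of_mem s hs t ht).antisymm (subset_of_mem t ht s hs)
  · rintro h x ⟨⟨s, hs, hxs⟩, t, ht, hxt⟩
    exact hxs (h ht hs ▸ hxt)

lemma ncard_sUnion_eq_iff_subsingleton {n : ℕ} (hF : F.Nonempty) (hfin : (⋃₀ F).Finite)
    (hcard : ∀ s ∈ F, s.ncard = n) : (⋃₀ F).ncard = n ↔ F.Subsingleton := by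
  constructor
  · intro h
    have eq_sUnion : ∀ s ∈ F, s = ⋃₀ F := fun s hs =>
      Set.eq_of_subset_of_ncard_le (Set.subset_sUnion_of_mem hs) (by rw [h, hcard s hs]) hfin
    exact fun s hs t ht => (eq_sUnion s hs).trans (eq_sUnion t ht).symm
  · intro h
    obtain ⟨s, hs⟩ := hF
    rw [h.eq_singleton_of_mem hs, Set.sUnion_singleton, hcard s hs]

end SetSystem

section Translates

variable {G : Type*} [Group G] {A B : Set G}

lemma sUnion_leftFam : ⋃₀ leftFam A B = B * A := by
  rw [leftFam, Set.sUnion_image]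
  exact Set.iUnion_smul_set B A

lemma sUnion_rightFam : ⋃₀ rightFam A B = A * B := by
  rw [rightFam, Set.sUnion_image, ← Set.mul_iUnion₂, Set.biUnion_of_singleton]

lemma ncard_mul_eq_right_iff_subsingleton_leftFam (hB : B.Nonempty) (hfin : (B * A).Finite) :
    (B * A).ncard = A.ncard ↔ (leftFam A B).Subsingleton := by
  rw [← sUnion_leftFam] at hfin ⊢
  refine ncard_sUnion_eq_iff_subsingleton (hB.image _) hfin ?_
  rintro _ ⟨x, -, rfl⟩
  exact Set.ncard_smul_set x A

lemma ncard_mul_eq_left_iff_subsingleton_rightFam (hB : B.Nonempty) (hfin : (A * B).Finite) :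
    (A * B).ncard = A.ncard ↔ (rightFam A B).Subsingleton := by
  rw [← sUnion_rightFam] at hfin ⊢
  refine ncard_sUnion_eq_iff_subsingleton (hB.image _) hfin ?_
  rintro _ ⟨x, -, rfl⟩
  dsimp only
  rw [Set.mul_singleton, Set.ncard_image_of_injective A (mul_left_injective x)]

end Translates

section Subheap

variable {G : Type*} [Group G] {A : Set G}

/-- `A` is closed under the ternary operation `(x, y, z) ↦ xy⁻¹z`, the heap operation of `G`.
The empty set counts as a subheap; the nonempty subheaps turn out to be the cosets. -/
def IsSubheap (A : Set G) : Prop :=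
  ∀ ⦃x⦄, x ∈ A → ∀ ⦃y⦄, y ∈ A → ∀ ⦃z⦄, z ∈ A → x * y⁻¹ * z ∈ A

lemma subsingleton_leftFam_inv_iff : (leftFam A A⁻¹).Subsingleton ↔ IsSubheap A := by
  constructor
  · intro h x hx y hy z hz
    have translates_eq : y⁻¹ • A = x⁻¹ • A :=
      h ⟨y⁻¹, Set.inv_mem_inv.2 hy, rfl⟩ ⟨x⁻¹, Set.inv_mem_inv.2 hx, rfl⟩
    have mem_translate : y⁻¹ * z ∈ x⁻¹ • A := translates_eq ▸ Set.smul_mem_smul_set hz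
    simpa [Set.mem_inv_smul_set_iff, mul_assoc] using mem_translate
  · intro h
    have translate_subset : ∀ x ∈ A⁻¹, ∀ y ∈ A⁻¹, x • A ⊆ y • A := by
      rintro x hx y hy _ ⟨z, hz, rfl⟩
      simpa [Set.mem_smul_set_iff_inv_smul_mem, mul_assoc] using h hy hx hz
    rintro _ ⟨x, hx, rfl⟩ _ ⟨y, hy, rfl⟩
    exact (translate_subset x hx y hy).antisymm (translate_subset y hy x hx)

lemma subsingleton_rightFam_inv_iff : (rightFam A A⁻¹).Subsingleton ↔ IsSubheap A := by
  constructor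
  · intro h x hx y hy z hz
    have translates_eq : A * {y⁻¹} = A * {z⁻¹} :=
      h ⟨y⁻¹, Set.inv_mem_inv.2 hy, rfl⟩ ⟨z⁻¹, Set.inv_mem_inv.2 hz, rfl⟩
    have mem_translate : x * y⁻¹ ∈ A * {z⁻¹} := translates_eq ▸ Set.mul_mem_mul hx rfl
    simpa using mem_translate
  · intro h
    have translate_subset : ∀ x ∈ A⁻¹, ∀ y ∈ A⁻¹, A * {x} ⊆ A * {y} := by
      rintro x hx y hy _ ⟨z, hz, _, rfl, rfl⟩
      simpa using h hz hx hy
    rintro _ ⟨x, hx, rfl⟩ _ ⟨y, hy, rfl⟩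
    exact (translate_subset x hx y hy).antisymm (translate_subset y hy x hx)

lemma isSubheap_leftCoset (H : Subgroup G) (a : G) : IsSubheap (a • (H : Set G)) := by
  rintro _ ⟨x, hx, rfl⟩ _ ⟨y, hy, rfl⟩ _ ⟨z, hz, rfl⟩
  refine ⟨x * y⁻¹ * z, H.mul_mem (H.mul_mem hx (H.inv_mem hy)) hz, ?_⟩
  simp [mul_assoc]

/-- The translate `a⁻¹A` of a subheap `A` by one of its elements, as a subgroup. It is the
subgroup of which `A` is a left coset. -/
def IsSubheap.subgroup (hA : IsSubheap A) {a : G} (ha : a ∈ A) : Subgroup G where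
  carrier := a⁻¹ • A
  one_mem' := by simpa [Set.mem_inv_smul_set_iff] using ha
  mul_mem' {x y} hx hy := by
    rw [Set.mem_inv_smul_set_iff, smul_eq_mul] at hx hy ⊢
    simpa [mul_assoc] using hA hx ha hy
  inv_mem' {x} hx := by
    rw [Set.mem_inv_smul_set_iff, smul_eq_mul] at hx ⊢
    simpa [mul_assoc] using hA ha hx ha

lemma IsSubheap.smul_subgroup_eq (hA : IsSubheap A) {a : G} (ha : a ∈ A) :
    a • (hA.subgroup ha : Set G) = A :=
  smul_inv_smul a A

lemma isSubheap_iff_exists_eq_smul_subgroup (hA : A.Nonempty) :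
    IsSubheap A ↔ ∃ (H : Subgroup G) (a : G), A = a • (H : Set G) := by
  constructor
  · intro h
    obtain ⟨a, ha⟩ := hA
    exact ⟨h.subgroup ha, a, (h.smul_subgroup_eq ha).symm⟩
  · rintro ⟨H, a, rfl⟩
    exact isSubheap_leftCoset H a

end Subheap

/-- equivalent characterizations of `VC^•_{A⁻¹}(A) = 0`
(Proposition 2.16(b) of the paper). -/
theorem vc_inv_eq_zero_tfae {G : Type*} [Group G] (A : Set G)
    (hA : A.Finite) (hAne : A.Nonempty) :
    List.TFAE
      [vcDim (leftFam A A⁻¹) = 0,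
       vcDim (rightFam A A⁻¹) = 0,
       (A * A⁻¹).ncard = A.ncard,
       (A⁻¹ * A).ncard = A.ncard,
       ∃ (H : Subgroup G) (a : G), A = a • (H : Set G)] := by
  rw [vcDim_eq_zero_iff_subsingleton, vcDim_eq_zero_iff_subsingleton,
    ncard_mul_eq_left_iff_subsingleton_rightFam hAne.inv (hA.mul hA.inv),
    ncard_mul_eq_right_iff_subsingleton_leftFam hAne.inv (hA.inv.mul hA),
    ← isSubheap_iff_exists_eq_smul_subgroup hAne]
  tfae_have 1 ↔ 4 := Iff.rfl
  tfae_have 2 ↔ 3 := Iff.rfl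
  tfae_have 1 ↔ 5 := subsingleton_leftFam_inv_iff
  tfae_have 2 ↔ 5 := subsingleton_rightFam_inv_iff
  tfae_finish
end

section
/- For every integer d ≥ 1 and every ε ∈ (0,1) there is a constant C = C(d,ε) such that the following holds. Let G be a finite group and A ⊆ G a d-NIP set. Then there is a normal subgroup H ≤ G of index at most C and a (δ,m)-Bohr neighborhood B in H with 1/δ ≤ C and m ≤ C satisfying: (i) there is a set F ⊆ G with |F| ≤ C such that |A △ FB| < ε|G|; and (ii) there is a set Z ⊆ G with |Z| ≤ ε|G| such that for all g ∈ G \ Z, either |gB ∩ A| < ε|B| or |gB \ A| < ε|B|. -/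
open scoped Pointwise symmDiff

/-- A `(δ,m)`-Bohr neighborhood in a group `H` (viewed as a subgroup of `G`):
the set of `h ∈ H` with `|τ(h)_i - 1| < δ` for all `i`, for some homomorphism
`τ : H → (S¹)^m` into the `m`-dimensional torus. -/
def IsBohrNbhdIn {G : Type*} [Group G] (H : Subgroup G) (δ : ℝ) (m : ℕ) (B : Set G) : Prop :=
  ∃ τ : H →* (Fin m → Circle),
    B = {g : G | ∃ h : H, (h : G) = g ∧ ∀ i : Fin m, ‖(τ h i : ℂ) - 1‖ < δ}

/-!
Let `A` be a `d`-NIP subset of a group `G` of order `n`. The sets `Ay⁻¹` form a family of bounded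
VC-dimension, and random sampling together with the Sauer–Shelah lemma shows that only boundedly
many of them can be pairwise `ηn`-far apart. Hence the set `S` of all `b` with `|Ab △ A| ≤ ηn` has
density bounded below. The operator `v ↦ v * 1_S` on `ℓ²(G)` has Hilbert–Schmidt norm squared
`n|S| ≤ n²`, so its large eigenvalues span a subspace `W` of bounded dimension, invariant under the
left regular representation `λ`. Since `1_S * 1_S` is almost in `W`, every `g` for which `λ g` is
close to `1` on `W` lies in `S⁴`. As in Jordan's theorem, the elements of `G` acting on `W` close to
`1` commute there, so some normal subgroup of bounded index acts on `W` through characters, and they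
define a Bohr set `B ⊆ S⁴`. Multiplication by any `b ∈ B` on the right therefore moves few points
across the boundary of `A`. Averaging this over `b ∈ B`, for all but few `x` the set `xB` lies
almost inside or almost outside `A`, and boundedly many random translates `yB` with `y ∈ A` cover
almost all of `A` and little else.
-/

section

open Finset Module
open scoped commutatorElement ComplexStarModule

-- This derandomises the choice of `k` independent uniform elements `y`: on average, each new `C y`
-- covers a proportion `p` of what is left of `A'` and adds `E` points outside `A`.
theorem exists_card_le_card_sdiff_biUnion_add_le {X Y : Type*} [DecidableEq X] [Fintype Y]
    [Nonempty Y] (C : Y → Finset X) (A A' : Finset X) {p E : ℝ} (hp : p ≤ 1)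
    (hdense : ∀ x ∈ A', p * Fintype.card Y ≤ #{y | x ∈ C y})
    (hE : ∑ y, (#(C y \ A) : ℝ) ≤ E * Fintype.card Y) (k : ℕ) :
    ∃ s : Finset Y, #s ≤ k ∧
      (#(A' \ s.biUnion C) + #(s.biUnion C \ A) : ℝ) ≤ (1 - p) ^ k * #A' + k * E := by
  classical
  induction k generalizing A' with
  | zero => exact ⟨∅, by simp⟩
  | succ k ih =>
    have hmiss : ∑ y, (#(A' \ C y) : ℝ) ≤ (1 - p) * #A' * Fintype.card Y := by
      have hcount : ∑ y, #(A' \ C y) = ∑ x ∈ A', #{y | x ∉ C y} := by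
        simp only [sdiff_eq_filter]
        exact sum_card_bipartiteAbove_eq_sum_card_bipartiteBelow _
      have hx : ∀ x ∈ A', (#{y | x ∉ C y} : ℝ) ≤ (1 - p) * Fintype.card Y := fun x hx ↦ by
        have hsplit := card_filter_add_card_filter_not (s := (univ : Finset Y)) (x ∈ C ·)
        rify [card_univ] at hsplit
        linarith [hdense x hx]
      calc ∑ y, (#(A' \ C y) : ℝ) = ∑ x ∈ A', (#{y | x ∉ C y} : ℝ) := mod_cast hcount
        _ ≤ #A' • ((1 - p) * Fintype.card Y) := sum_le_card_nsmul _ _ _ hx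
        _ = (1 - p) * #A' * Fintype.card Y := by rw [nsmul_eq_mul]; ring
    obtain ⟨y, -, hy⟩ : ∃ y ∈ univ, (1 - p) ^ k * #(A' \ C y) + #(C y \ A)
        ≤ (1 - p) ^ (k + 1) * #A' + E := by
      refine exists_le_of_sum_le univ_nonempty ?_
      rw [sum_add_distrib, ← mul_sum, sum_const, card_univ, nsmul_eq_mul]
      have : 0 ≤ (1 - p) ^ k := pow_nonneg (sub_nonneg.2 hp) k
      linear_combination (1 - p) ^ k * hmiss + hE
    obtain ⟨s, hsk, hs⟩ := ih (A' \ C y) fun x hx ↦ hdense x (sdiff_subset hx)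
    refine ⟨insert y s, (card_insert_le _ _).trans (by lia), ?_⟩
    rw [biUnion_insert, ← sup_eq_union, ← _root_.sdiff_sdiff_left, sup_eq_union,
      union_sdiff_distrib, Nat.cast_succ]
    have hunion : (#(C y \ A ∪ s.biUnion C \ A) : ℝ) ≤ #(C y \ A) + #(s.biUnion C \ A) :=
      mod_cast card_union_le _ _
    linarith

open Filter Topology in
theorem exists_pow_lt_and_sq_mul_pow_lt_one (D : ℕ) {r : ℝ} (hr0 : 0 < r) (hr1 : r < 1) :
    ∃ k M : ℕ, (D + 1) * (k + 1) ^ D < M ∧ (M : ℝ) ^ 2 * r ^ k < 1 := by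
  have hlim : Tendsto (fun k : ℕ ↦
      (D + 2 : ℝ) ^ 2 * r⁻¹ * (((k + 1 : ℕ) : ℝ) ^ (2 * D) * r ^ (k + 1))) atTop (𝓝 0) := by
    simpa only [mul_zero, Function.comp_def] using ((tendsto_pow_const_mul_const_pow_of_abs_lt_one
      (2 * D) (by rwa [abs_of_pos hr0])).comp (tendsto_add_atTop_nat 1)).const_mul _
  obtain ⟨k, hk⟩ := (hlim.eventually_lt_const one_pos).exists
  refine ⟨k, (D + 2) * (k + 1) ^ D, by gcongr; lia, hk.trans_eq' ?_⟩
  push_cast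
  field_simp
  ring

theorem card_le_of_vcDim_le_of_injOn_inter {X : Type*} [DecidableEq X] {𝓕 : Finset (Finset X)}
    {J : Finset X} {D k : ℕ} (hD : 𝓕.vcDim ≤ D) (hJ : #J ≤ k)
    (hinj : Set.InjOn (· ∩ J) (𝓕 : Set (Finset X))) : #𝓕 ≤ (D + 1) * (k + 1) ^ D := by
  set 𝓙 := 𝓕.image (· ∩ J)
  have hsubset : 𝓙.shatterer ⊆ (range (D + 1)).biUnion fun i ↦ J.powersetCard i := fun s hs ↦ by
    have hs : 𝓙.Shatters s := mem_shatterer.1 hs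
    obtain ⟨t, ht, hst⟩ := hs subset_rfl
    obtain ⟨u, -, rfl⟩ := mem_image.1 ht
    have hsJ : s ⊆ J := fun x hx ↦ (mem_inter.1 (inter_eq_left.1 hst hx)).2
    have hs𝓕 : 𝓕.Shatters s := fun v hv ↦ by
      obtain ⟨t, ht, rfl⟩ := hs hv
      obtain ⟨u, hu, rfl⟩ := mem_image.1 ht
      exact ⟨u, hu, by rw [inter_comm u, ← inter_assoc, inter_eq_left.2 hsJ]⟩
    simp only [mem_biUnion, mem_range, mem_powersetCard, Nat.lt_succ_iff]
    exact ⟨#s, hs𝓕.card_le_vcDim.trans hD, hsJ, rfl⟩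
  calc #𝓕 = #𝓙 := (card_image_of_injOn hinj).symm
    _ ≤ #𝓙.shatterer := card_le_card_shatterer 𝓙
    _ ≤ ∑ i ∈ range (D + 1), (#J).choose i := by
      simpa only [card_powersetCard] using (card_le_card hsubset).trans card_biUnion_le
    _ ≤ ∑ i ∈ range (D + 1), (k + 1) ^ D := by
      gcongr with i hi
      calc (#J).choose i ≤ #J ^ i := Nat.choose_le_pow _ _
        _ ≤ (k + 1) ^ i := by gcongr; lia
        _ ≤ (k + 1) ^ D := Nat.pow_le_pow_right k.succ_pos (Nat.lt_succ_iff.1 (mem_range.1 hi))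
    _ = (D + 1) * (k + 1) ^ D := by simp

theorem exists_card_le_injOn_inter {X : Type*} [Fintype X] [Nonempty X] [DecidableEq X]
    {𝓕 : Finset (Finset X)} {k : ℕ} {η : ℝ} (hη : η ≤ 1) (hk : (#𝓕 : ℝ) ^ 2 * (1 - η) ^ k < 1)
    (hsep : ∀ s ∈ 𝓕, ∀ t ∈ 𝓕, s ≠ t → η * Fintype.card X ≤ #(s ∆ t)) :
    ∃ J : Finset X, #J ≤ k ∧ Set.InjOn (· ∩ J) (𝓕 : Set (Finset X)) := by
  set C : X → Finset (Finset X × Finset X) := fun x ↦ {p ∈ 𝓕.offDiag | x ∈ p.1 ∆ p.2} with hC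
  obtain ⟨J, hJk, hJ⟩ := exists_card_le_card_sdiff_biUnion_add_le C 𝓕.offDiag 𝓕.offDiag hη
    (E := 0)
    (fun p hp ↦ by
      obtain ⟨h₁, h₂, hne⟩ := mem_offDiag.1 hp
      simpa [hC, h₁, h₂, hne] using hsep _ h₁ _ h₂ hne)
    (by simp [hC, sdiff_eq_empty_iff_subset.2 (filter_subset _ _)]) k
  have hcard : (#𝓕.offDiag : ℝ) ≤ #𝓕 ^ 2 := by
    rw [offDiag_card, sq]
    exact_mod_cast Nat.sub_le _ _
  have hlt : (#(𝓕.offDiag \ J.biUnion C) : ℝ) < 1 := by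
    have hpow : 0 ≤ (1 - η) ^ k := pow_nonneg (sub_nonneg.2 hη) k
    nlinarith [(#(J.biUnion C \ 𝓕.offDiag)).cast_nonneg (α := ℝ)]
  have hcover : 𝓕.offDiag ⊆ J.biUnion C := by
    rw [← sdiff_eq_empty_iff_subset, ← card_eq_zero]
    exact Nat.lt_one_iff.1 (mod_cast hlt)
  refine ⟨J, hJk, fun s hs t ht hst ↦ by_contra fun hne ↦ ?_⟩
  obtain ⟨x, hxJ, hx⟩ := mem_biUnion.1 (hcover (mem_offDiag (x := (s, t)).2 ⟨hs, ht, hne⟩))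
  have hiff : x ∈ s ↔ x ∈ t := by simpa [hxJ] using Finset.ext_iff.1 hst x
  simp [hC, mem_symmDiff, hiff] at hx

theorem card_lt_of_vcDim_le {X : Type*} [Fintype X] [Nonempty X] [DecidableEq X]
    {𝓕 : Finset (Finset X)} {D k M : ℕ} {η : ℝ} (hη : η ≤ 1) (hM : (D + 1) * (k + 1) ^ D < M)
    (hk : (M : ℝ) ^ 2 * (1 - η) ^ k < 1) (hD : 𝓕.vcDim ≤ D)
    (hsep : ∀ s ∈ 𝓕, ∀ t ∈ 𝓕, s ≠ t → η * Fintype.card X ≤ #(s ∆ t)) : #𝓕 < M := by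
  by_contra! hcard
  obtain ⟨𝓖, h𝓖, rfl⟩ := exists_subset_card_eq hcard
  obtain ⟨J, hJk, hJ⟩ := exists_card_le_injOn_inter hη hk
    fun s hs t ht ↦ hsep s (h𝓖 hs) t (h𝓖 ht)
  exact hM.not_ge (card_le_of_vcDim_le_of_injOn_inter ((vcDim_mono h𝓖).trans hD) hJk hJ)

theorem exists_shatters_range_of_two_pow_le_card {X Y : Type*} (r : X → Y → Prop) {d : ℕ}
    {s : Finset X} (hs : 2 ^ d ≤ #s)
    (h : _root_.Shatters (Set.range fun y ↦ {x | r x y}) (s : Set X)) :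
    ∃ t : Finset Y, #t = d ∧ _root_.Shatters (Set.range fun x ↦ {y | r x y}) (t : Set Y) := by
  classical
  obtain ⟨e⟩ : Nonempty (Finset (Fin d) ↪ s) :=
    Function.Embedding.nonempty_of_card_le (by simpa using hs)
  have hcut (j : Fin d) : ∃ y, ∀ T, r (e T) y ↔ j ∈ T := by
    obtain ⟨_, ⟨y, rfl⟩, hy⟩ := h ((fun T ↦ (e T : X)) '' {T | j ∈ T})
      (Set.image_subset_iff.2 fun T _ ↦ (e T).2)
    refine ⟨y, fun T ↦ ?_⟩
    have := Set.ext_iff.1 hy (e T)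
    simpa [Subtype.coe_inj] using this
  choose z hz using hcut
  have hzinj : Function.Injective z := fun i j hij ↦ by
    have hi := (hz i {i}).2 (mem_singleton_self i)
    rw [hij, hz, mem_singleton] at hi
    exact hi.symm
  refine ⟨univ.map ⟨z, hzinj⟩, by simp, fun T hT ↦ ⟨_, ⟨e {j | z j ∈ T}, rfl⟩, ?_⟩⟩
  ext y
  constructor
  · rintro ⟨hy, hry⟩
    obtain ⟨j, -, rfl⟩ := mem_map.1 (mem_coe.1 hy)
    simpa using (hz j _).1 hry
  · intro hy
    obtain ⟨j, -, rfl⟩ := mem_map.1 (mem_coe.1 (hT hy))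
    exact ⟨hT hy, (hz j _).2 (by simpa using hy)⟩

theorem card_le_mul_ncard_of_forall_card_le {G : Type*} [Group G] [Finite G] {B : Set G}
    (hone : 1 ∈ B) (hinv : ∀ x ∈ B, x⁻¹ ∈ B) {N : ℕ}
    (hN : ∀ s : Finset G, (s : Set G).Pairwise (fun x y ↦ x⁻¹ * y ∉ B) → #s ≤ N) :
    Nat.card G ≤ N * B.ncard := by
  classical
  obtain ⟨s, hs⟩ := exists_maximal_of_wellFoundedGT
    (fun s : Finset G ↦ (s : Set G).Pairwise fun x y ↦ x⁻¹ * y ∉ B) ⟨∅, by simp⟩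
  have hcover : (s : Set G) * B = Set.univ := by
    refine Set.eq_univ_of_forall fun g ↦ by_contra fun hg ↦ ?_
    have hsg : ∀ x ∈ s, x⁻¹ * g ∉ B := fun x hx hxg ↦
      hg (Set.mem_mul.2 ⟨x, hx, _, hxg, mul_inv_cancel_left x g⟩)
    have hgs : g ∉ s := fun h ↦ hsg g h (by simpa using hone)
    have hpair : ((insert g s : Finset G) : Set G).Pairwise fun x y ↦ x⁻¹ * y ∉ B := by
      rw [coe_insert, Set.pairwise_insert]
      exact ⟨hs.1, fun x hx _ ↦ ⟨fun h ↦ hsg x hx (by simpa using hinv _ h), hsg x hx⟩⟩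
    exact hgs (hs.2 hpair (subset_insert g s) (mem_insert_self g s))
  calc Nat.card G = Nat.card ((s : Set G) * B : Set G) := by rw [hcover, Nat.card_univ]
    _ ≤ Nat.card (s : Set G) * Nat.card B := Set.natCard_mul_le
    _ = #s * B.ncard := by rw [Nat.card_coe_set_eq, Set.ncard_coe_finset, Nat.card_coe_set_eq]
    _ ≤ N * B.ncard := by gcongr; exact hN s hs.1

theorem vcDim_image_filter_mul_mem_lt {G : Type*} [Group G] [Fintype G] [DecidableEq G]
    {A : Finset G} {d : ℕ} (hA : _root_.vcDim (leftFam (A : Set G) Set.univ) < d) :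
    (univ.image fun y ↦ ({x | x * y ∈ A} : Finset G)).vcDim < 2 ^ d := by
  refine (Finset.sup_lt_iff (by positivity)).2 fun s hs ↦ lt_of_not_ge fun hcard ↦ hA.not_ge ?_
  have hs' : _root_.Shatters (Set.range fun y ↦ {x | x * y ∈ A}) (s : Set G) := fun T hT ↦ by
    lift T to Finset G using s.finite_toSet.subset hT
    obtain ⟨u, hu, huT⟩ := mem_shatterer.1 hs (coe_subset.1 hT)
    obtain ⟨y, -, rfl⟩ := mem_image.1 hu
    exact ⟨_, ⟨y, rfl⟩, by simpa [← coe_inj] using huT⟩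
  obtain ⟨t, rfl, ht⟩ := exists_shatters_range_of_two_pow_le_card _ hcard hs'
  have hleft : (Set.range fun x : G ↦ {y | x * y ∈ A}) = leftFam (A : Set G) Set.univ := by
    rw [leftFam, Set.image_univ, ← inv_surjective.range_comp]
    congr! 2 with x
    simp [Set.mem_smul_set_iff_inv_smul_mem, Set.ext_iff]
  exact le_iSup₂_of_le t (hleft ▸ ht) le_rfl

section StabR

variable {G : Type*} [Group G] {A : Set G} {M N : ℝ} {a b : G}

theorem mem_stabR_iff : b ∈ stabR A N ↔ ({x | ¬(x ∈ A ↔ x * b ∈ A)}.ncard : ℝ) ≤ N := by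
  have himage : (A * {b}) ∆ A = (· * b) '' {x | ¬(x ∈ A ↔ x * b ∈ A)} := by
    ext g
    simp [Set.image_mul_right, Set.mem_symmDiff]
    tauto
  rw [stabR, Set.mem_ofPred_eq, himage, Set.ncard_image_of_injective _ (mul_left_injective b)]

theorem mem_stabR_coe_iff [Fintype G] [DecidableEq G] {A : Finset G} :
    b ∈ stabR (A : Set G) N ↔ (#{x | ¬(x ∈ A ↔ x * b ∈ A)} : ℝ) ≤ N := by
  rw [mem_stabR_iff, ← Set.ncard_coe_finset, coe_filter_univ]
  rfl

theorem one_mem_stabR (hN : 0 ≤ N) : 1 ∈ stabR A N := by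
  simpa [mem_stabR_iff] using hN

theorem inv_mem_stabR (hb : b ∈ stabR A N) : b⁻¹ ∈ stabR A N := by
  rw [mem_stabR_iff] at hb ⊢
  convert hb using 2
  rw [← Set.ncard_image_of_injective _ (mul_left_injective b⁻¹)]
  congr
  ext x
  simp [iff_comm]

theorem mul_mem_stabR [Finite G] (ha : a ∈ stabR A M) (hb : b ∈ stabR A N) :
    a * b ∈ stabR A (M + N) := by
  rw [mem_stabR_iff] at *
  have hshift : {x | ¬(x * a ∈ A ↔ x * (a * b) ∈ A)}.ncard = {x | ¬(x ∈ A ↔ x * b ∈ A)}.ncard := by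
    rw [← Set.ncard_image_of_injective _ (mul_left_injective a)]
    simp [Set.image_mul_right, mul_assoc]
  have hsplit : {x | ¬(x ∈ A ↔ x * (a * b) ∈ A)}.ncard ≤
      {x | ¬(x ∈ A ↔ x * a ∈ A)}.ncard + {x | ¬(x * a ∈ A ↔ x * (a * b) ∈ A)}.ncard := by
    refine (Set.ncard_le_ncard fun x hx ↦ ?_).trans (Set.ncard_union_le _ _)
    simp only [Set.mem_union, Set.mem_ofPred_eq] at hx ⊢
    tauto
  rify [hshift] at hsplit
  linarith

theorem mul_subset_stabR [Finite G] {S T : Set G} (hS : S ⊆ stabR A M) (hT : T ⊆ stabR A N) :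
    S * T ⊆ stabR A (M + N) :=
  Set.mul_subset_iff.2 fun _ ha _ hb ↦ mul_mem_stabR (hS ha) (hT hb)

end StabR

theorem exists_forall_card_le_mul_ncard_stabR (d : ℕ) {η : ℝ} (hη0 : 0 < η) (hη1 : η < 1) :
    ∃ M : ℕ, ∀ (G : Type*) [Group G] [Finite G] (A : Finset G),
      _root_.vcDim (leftFam (A : Set G) Set.univ) < d →
      Nat.card G ≤ M * (stabR (A : Set G) (η * Nat.card G)).ncard := by
  classical
  obtain ⟨k, M, hM, hk⟩ := exists_pow_lt_and_sq_mul_pow_lt_one (2 ^ d) (sub_pos.2 hη1)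
    (sub_lt_self 1 hη0)
  refine ⟨M, fun G _ _ A hA ↦ ?_⟩
  cases nonempty_fintype G
  have hcard : 0 < η * Nat.card G := mul_pos hη0 (mod_cast Nat.card_pos)
  refine card_le_mul_ncard_of_forall_card_le (one_mem_stabR hcard.le)
    (fun _ ↦ inv_mem_stabR) fun s hs ↦ ?_
  set translate : G → Finset G := fun y ↦ {x | x * y ∈ A} with htranslate
  have hsep : ∀ x ∈ s, ∀ y ∈ s, x ≠ y → η * Nat.card G < #(translate x ∆ translate y) := by
    intro x hx y hy hxy
    have hxy' : η * Nat.card G < #{g | ¬(g ∈ A ↔ g * (x⁻¹ * y) ∈ A)} := by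
      simpa only [mem_stabR_coe_iff, not_le] using hs hx hy hxy
    refine hxy'.trans_eq (congrArg Nat.cast ?_)
    exact card_equiv (Equiv.mulRight x⁻¹) fun g ↦ by
      simp [htranslate, mem_symmDiff, mul_assoc]; tauto
  have hinj : Set.InjOn translate s := fun x hx y hy hxy ↦ by_contra fun hne ↦
    absurd (hsep x hx y hy hne) (by simpa [hxy] using hcard.le)
  rw [← card_image_of_injOn hinj]
  refine (card_lt_of_vcDim_le hη1.le hM hk ?_ ?_).le
  · exact (vcDim_mono (image_subset_image (subset_univ s))).trans
      (vcDim_image_filter_mul_mem_lt hA).le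
  · simp only [mem_image, forall_exists_index, and_imp, forall_apply_eq_imp_iff₂]
    intro x hx y hy hxy
    rw [← Nat.card_eq_fintype_card]
    exact (hsep x hx y hy fun h ↦ hxy (h ▸ rfl)).le

theorem eq_one_of_isOfFinOrder_of_forall_norm_pow_sub_one_lt_one {R : Type*} [NormedRing R]
    [NormedAlgebra ℝ R] {c : R} (hc : IsOfFinOrder c) (h : ∀ k, ‖c ^ k - 1‖ < 1) : c = 1 := by
  -- The average of `1, c, …, c ^ (n - 1)` is annihilated by `1 - c`, yet is at distance less than
  -- `1` from `1`.
  set n := orderOf c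
  have hn : 0 < n := hc.orderOf_pos
  set e : R := ∑ i ∈ range n, c ^ i
  have hfix : (1 - c) * e = 0 := by rw [mul_neg_geom_sum, pow_orderOf_eq_one, sub_self]
  have hclose : ‖(n : R) - e‖ < n := by
    calc ‖(n : R) - e‖ = ‖∑ i ∈ range n, (1 - c ^ i)‖ := by simp [e]
      _ ≤ ∑ i ∈ range n, ‖1 - c ^ i‖ := norm_sum_le _ _
      _ < ∑ i ∈ range n, 1 := sum_lt_sum_of_nonempty (by simpa using hn.ne')
        fun i _ ↦ (norm_sub_rev _ _).trans_lt (h i)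
      _ = n := by simp
  have hnorm : n * ‖1 - c‖ ≤ ‖1 - c‖ * ‖(n : R) - e‖ := by
    calc n * ‖1 - c‖ = ‖(1 - c) * ((n : R) - e)‖ := by
          rw [mul_sub, hfix, sub_zero, ← nsmul_eq_mul', RCLike.norm_nsmul ℝ, nsmul_eq_mul]
      _ ≤ ‖1 - c‖ * ‖(n : R) - e‖ := norm_mul_le _ _
  by_contra hne
  have hpos : 0 < ‖1 - c‖ := norm_pos_iff.2 (sub_ne_zero.2 (Ne.symm hne))
  nlinarith

theorem commutatorElement_pow_left_of_commute {G : Type*} [Group G] {a b : G}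
    (h : Commute a ⁅a, b⁆) (k : ℕ) : ⁅a ^ k, b⁆ = ⁅a, b⁆ ^ k := by
  have hconj : b * a⁻¹ * b⁻¹ = a⁻¹ * ⁅a, b⁆ := by rw [commutatorElement_def]; group
  calc ⁅a ^ k, b⁆ = a ^ k * (b * a⁻¹ * b⁻¹) ^ k := by rw [conj_pow, commutatorElement_def]; group
    _ = ⁅a, b⁆ ^ k := by rw [hconj, h.inv_left.mul_pow, inv_pow, mul_inv_cancel_left]

theorem norm_commutatorElement_units_sub_one_le {R : Type*} [NormedRing R] {a b : Rˣ}
    (ha : ‖(a : R)‖ ≤ 1) (ha' : ‖((a⁻¹ : Rˣ) : R)‖ ≤ 1) (hb : ‖((b⁻¹ : Rˣ) : R)‖ ≤ 1) :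
    ‖((⁅a, b⁆ : Rˣ) : R) - 1‖ ≤ 2 * ‖(b : R) - 1‖ := by
  have hfactor : ((⁅a, b⁆ : Rˣ) : R) - 1
      = (a * (b - 1) * (a⁻¹ : Rˣ) - (b - 1)) * (b⁻¹ : Rˣ) := by
    simp [commutatorElement_def, mul_sub, sub_mul]
  calc ‖((⁅a, b⁆ : Rˣ) : R) - 1‖
      ≤ (‖(a : R)‖ * ‖(b : R) - 1‖ * ‖((a⁻¹ : Rˣ) : R)‖ + ‖(b : R) - 1‖) * ‖((b⁻¹ : Rˣ) : R)‖ := by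
        rw [hfactor]
        exact norm_mul_le_of_le (norm_sub_le_of_le (norm_mul₃_le ..) le_rfl) le_rfl
    _ ≤ (1 * ‖(b : R) - 1‖ * 1 + ‖(b : R) - 1‖) * 1 := by gcongr
    _ = 2 * ‖(b : R) - 1‖ := by ring

theorem commute_of_norm_sub_one_lt_half {G R : Type*} [Group G] [Finite G] [NormedRing R]
    [NormedAlgebra ℝ R] (ρ : G →* Rˣ) (hρ : ∀ g, ‖(ρ g : R)‖ ≤ 1) {g h : G}
    (hg : ‖(ρ g : R) - 1‖ < 1 / 2) (hh : ‖(ρ h : R) - 1‖ < 1 / 2) : Commute (ρ g) (ρ h) := by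
  by_contra hgh
  -- Take `h` with `ρ h` closest to `1`: then `⁅g, h⁆` is closer still, so it commutes with `g`.
  obtain ⟨h, ⟨hh, g, hg, hgh⟩, hmin⟩ := Set.exists_min_image
    {h | ‖(ρ h : R) - 1‖ < 1 / 2 ∧ ∃ g, ‖(ρ g : R) - 1‖ < 1 / 2 ∧ ¬Commute (ρ g) (ρ h)}
    (fun h ↦ ‖(ρ h : R) - 1‖) (Set.toFinite _) ⟨h, hh, g, hg, hgh⟩
  have hinv (x : G) : ‖((ρ x)⁻¹ : Rˣ).val‖ ≤ 1 := map_inv ρ x ▸ hρ x⁻¹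
  have hpos : 0 < ‖(ρ h : R) - 1‖ := norm_pos_iff.2 fun hzero ↦ by
    have hone : ρ h = 1 := Units.ext (sub_eq_zero.1 hzero)
    exact hgh (hone ▸ Commute.one_right _)
  have hlt : ‖(ρ ⁅g, h⁆ : R) - 1‖ < ‖(ρ h : R) - 1‖ := by
    calc ‖(ρ ⁅g, h⁆ : R) - 1‖
        ≤ 2 * ‖((ρ g)⁻¹ : Rˣ).val‖ * ‖((ρ h)⁻¹ : Rˣ).val‖ * ‖(ρ g : R) - 1‖ * ‖(ρ h : R) - 1‖ := by
          rw [map_commutatorElement]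
          exact norm_commutator_units_sub_one_le _ _
      _ ≤ 2 * 1 * 1 * ‖(ρ g : R) - 1‖ * ‖(ρ h : R) - 1‖ := by gcongr <;> exact hinv _
      _ < ‖(ρ h : R) - 1‖ := by nlinarith
  have hcomm : Commute (ρ g) ⁅ρ g, ρ h⁆ := by
    rw [← map_commutatorElement]
    by_contra hne
    exact (hmin ⁅g, h⁆ ⟨hlt.trans hh, g, hg, hne⟩).not_gt hlt
  have hone : (⁅ρ g, ρ h⁆ : Rˣ).val = 1 := by
    refine eq_one_of_isOfFinOrder_of_forall_norm_pow_sub_one_lt_one ?_ fun k ↦ ?_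
    · rw [← map_commutatorElement]
      exact ((Units.coeHom R).comp ρ).isOfFinOrder (isOfFinOrder_of_finite _)
    · rw [← Units.val_pow_eq_pow_val, ← commutatorElement_pow_left_of_commute hcomm]
      have := norm_commutatorElement_units_sub_one_le (a := ρ g ^ k) (b := ρ h)
        (map_pow ρ g k ▸ hρ _) (map_pow ρ g k ▸ hinv _) (hinv h)
      linarith
  exact hgh (commutatorElement_eq_one_iff_commute.1 (Units.ext hone))

theorem exists_orthonormalBasis_forall_eigenvector_of_isSymmetric {𝕜 V ι : Type*} [RCLike 𝕜]
    [NormedAddCommGroup V] [InnerProductSpace 𝕜 V] [FiniteDimensional 𝕜 V] {T : ι → V →ₗ[𝕜] V}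
    (hT : ∀ i, (T i).IsSymmetric) (hcomm : ∀ i j, Commute (T i) (T j)) :
    ∃ b : OrthonormalBasis (Fin (finrank 𝕜 V)) 𝕜 V, ∀ k i, ∃ μ : 𝕜, T i (b k) = μ • b k := by
  classical
  set W : (ι → 𝕜) → Submodule 𝕜 V := fun γ ↦ ⨅ i, Module.End.eigenspace (T i) (γ i)
  have hinternal : DirectSum.IsInternal W :=
    LinearMap.IsSymmetric.directSum_isInternal_of_pairwise_commute hT fun i j _ ↦ hcomm i j
  have horth : OrthogonalFamily 𝕜 (fun γ ↦ W γ) fun γ ↦ (W γ).subtypeₗᵢ :=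
    LinearMap.IsSymmetric.orthogonalFamily_iInf_eigenspaces hT
  have hfin : {γ | W γ ≠ ⊥}.Finite :=
    WellFoundedGT.finite_ne_bot_of_iSupIndep hinternal.submodule_iSupIndep
  let _ : Fintype {γ // W γ ≠ ⊥} := hfin.fintype
  have hinternal' := DirectSum.isInternal_ne_bot_iff.2 hinternal
  have horth' := horth.comp (Subtype.val_injective (p := fun γ ↦ W γ ≠ ⊥))
  refine ⟨hinternal'.subordinateOrthonormalBasis rfl horth', fun k i ↦ ?_⟩
  have hk := hinternal'.subordinateOrthonormalBasis_subordinate rfl k horth'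
  exact ⟨_, Module.End.mem_eigenspace_iff.1 ((Submodule.mem_iInf _).1 hk i)⟩

theorem commute_realPart_of_commute {R : Type*} [CStarAlgebra R] {a b : R} (ha : IsStarNormal a)
    (h : Commute a b) : Commute (ℜ a : R) b := by
  rw [realPart_apply_coe]
  exact (h.add_left (ha.commute_star_left h)).smul_left _

theorem commute_imaginaryPart_of_commute {R : Type*} [CStarAlgebra R] {a b : R}
    (ha : IsStarNormal a) (h : Commute a b) : Commute (ℑ a : R) b := by
  rw [imaginaryPart_apply_coe]
  exact ((h.sub_left (ha.commute_star_left h)).smul_left _).smul_left _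

theorem exists_orthonormalBasis_forall_eigenvector {V ι : Type*} [NormedAddCommGroup V]
    [InnerProductSpace ℂ V] [FiniteDimensional ℂ V] {T : ι → V →L[ℂ] V}
    (hT : ∀ i, IsStarNormal (T i)) (hcomm : ∀ i j, Commute (T i) (T j)) :
    ∃ b : OrthonormalBasis (Fin (finrank ℂ V)) ℂ V, ∀ k i, ∃ μ : ℂ, T i (b k) = μ • b k := by
  have := FiniteDimensional.complete ℂ V
  set S : ι ⊕ ι → V →L[ℂ] V := Sum.elim (fun i ↦ ℜ (T i)) (fun i ↦ ℑ (T i))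
  have hsymm : ∀ x, (S x : V →ₗ[ℂ] V).IsSymmetric := by
    rintro (i | i)
    exacts [(ℜ (T i)).2.isSymmetric, (ℑ (T i)).2.isSymmetric]
  have hS_commute : ∀ i x, Commute (T i) (S x) := by
    rintro i (j | j)
    exacts [(commute_realPart_of_commute (hT j) (hcomm j i)).symm,
      (commute_imaginaryPart_of_commute (hT j) (hcomm j i)).symm]
  have hSS : ∀ x y, Commute (S x) (S y) := by
    rintro (i | i) y
    exacts [commute_realPart_of_commute (hT i) (hS_commute i y),
      commute_imaginaryPart_of_commute (hT i) (hS_commute i y)]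
  obtain ⟨b, hb⟩ := exists_orthonormalBasis_forall_eigenvector_of_isSymmetric hsymm
    fun x y ↦ (hSS x y).map ContinuousLinearMap.toLinearMapRingHom
  refine ⟨b, fun k i ↦ ?_⟩
  obtain ⟨μ, hμ⟩ := hb k (.inl i)
  obtain ⟨ν, hν⟩ := hb k (.inr i)
  refine ⟨μ + Complex.I * ν, ?_⟩
  calc T i (b k) = S (.inl i) (b k) + Complex.I • S (.inr i) (b k) := by
        simpa [S] using
          (DFunLike.congr_fun (realPart_add_I_smul_imaginaryPart (T i)) (b k)).symm
    _ = (μ + Complex.I * ν) • b k := by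
        rw [add_smul, mul_smul, ← hμ, ← hν]; rfl

theorem norm_apply_le_of_forall_eigenvector {𝕜 V κ : Type*} [RCLike 𝕜] [NormedAddCommGroup V]
    [InnerProductSpace 𝕜 V] [Fintype κ] (b : OrthonormalBasis κ 𝕜 V) {T : V →ₗ[𝕜] V}
    {μ : κ → 𝕜} (hT : ∀ i, T (b i) = μ i • b i) {c : ℝ} (hc : 0 ≤ c) {v : V}
    (hμ : ∀ i, inner 𝕜 (b i) v ≠ 0 → ‖μ i‖ ≤ c) : ‖T v‖ ≤ c * ‖v‖ := by
  classical
  have hcoord (i : κ) : inner 𝕜 (b i) (T v) = μ i * inner 𝕜 (b i) v := by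
    conv_lhs => rw [← b.sum_repr' v]
    simp [hT, inner_sum, inner_smul_right, b.inner_eq_ite, mul_comm]
  refine le_of_sq_le_sq ?_ (by positivity)
  rw [mul_pow, ← b.sum_sq_norm_inner_right, ← b.sum_sq_norm_inner_right, mul_sum]
  gcongr with i
  rw [hcoord, norm_mul, mul_pow]
  by_cases hi : inner 𝕜 (b i) v = 0
  · simp [hi]
  · gcongr
    exact hμ i hi

theorem card_le_five_pow_of_pairwise_half_le_norm_sub {α E : Type*} [NormedAddCommGroup E]
    [NormedSpace ℝ E] [FiniteDimensional ℝ E] {f : α → E} {s : Finset α} (hf : ∀ x ∈ s, ‖f x‖ ≤ 1)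
    (hs : (s : Set α).Pairwise fun x y ↦ 1 / 2 ≤ ‖f x - f y‖) : #s ≤ 5 ^ finrank ℝ E := by
  classical
  have hscale (x y : α) : ‖(2 : ℝ) • f x - (2 : ℝ) • f y‖ = 2 * ‖f x - f y‖ := by
    rw [← smul_sub, norm_smul, Real.norm_ofNat]
  have hinj : Set.InjOn (fun x ↦ (2 : ℝ) • f x) s := fun x hx y hy hxy ↦ by_contra fun hne ↦ by
    have hzero : 2 * ‖f x - f y‖ = 0 := by rw [← hscale, norm_eq_zero, sub_eq_zero]; exact hxy
    linarith [hs hx hy hne]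
  rw [← card_image_of_injOn hinj]
  refine Besicovitch.card_le_of_separated _ (fun c hc ↦ ?_) fun c hc d hd hcd ↦ ?_
  · obtain ⟨x, hx, rfl⟩ := mem_image.1 hc
    rw [norm_smul, Real.norm_ofNat]
    linarith [hf x hx]
  · obtain ⟨x, hx, rfl⟩ := mem_image.1 hc
    obtain ⟨y, hy, rfl⟩ := mem_image.1 hd
    rw [hscale]
    linarith [hs hx hy fun h ↦ hcd (h ▸ rfl)]

section BoundedRepresentation

variable {G R : Type*} [Group G] [Finite G] [NormedRing R] [NormedAlgebra ℝ R]
  {ρ : G →* R}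

theorem card_le_mul_ncard_norm_map_sub_one_lt_half [FiniteDimensional ℝ R] (hρ : ∀ g, ‖ρ g‖ ≤ 1) :
    Nat.card G ≤ 5 ^ finrank ℝ R * {g | ‖ρ g - 1‖ < 1 / 2}.ncard := by
  have hle (x y : G) : ‖ρ (x⁻¹ * y) - 1‖ ≤ ‖ρ x - ρ y‖ := by
    calc ‖ρ (x⁻¹ * y) - 1‖ = ‖ρ x⁻¹ * (ρ y - ρ x)‖ := by
          rw [mul_sub, ← map_mul, ← map_mul, inv_mul_cancel, map_one]
      _ ≤ 1 * ‖ρ x - ρ y‖ := norm_mul_le_of_le (hρ _) (norm_sub_rev _ _).le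
      _ = ‖ρ x - ρ y‖ := one_mul _
  refine card_le_mul_ncard_of_forall_card_le (by simp) (fun g hg ↦ ?_) fun s hs ↦ ?_
  · have := hle g 1
    rw [mul_one, map_one] at this
    exact this.trans_lt hg
  · exact card_le_five_pow_of_pairwise_half_le_norm_sub (fun g _ ↦ hρ g)
      fun x hx y hy hxy ↦ (not_lt.1 (hs hx hy hxy)).trans (hle x y)

theorem commute_of_mem_normalClosure_norm_sub_one_lt_half (hρ : ∀ g, ‖ρ g‖ ≤ 1) {g h : G}
    (hg : g ∈ Subgroup.normalClosure {g | ‖ρ g - 1‖ < 1 / 2})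
    (hh : h ∈ Subgroup.normalClosure {g | ‖ρ g - 1‖ < 1 / 2}) : Commute (ρ g) (ρ h) := by
  set U : Set G := {g | ‖ρ g - 1‖ < 1 / 2}
  have hconj : Group.conjugatesOfSet U ⊆ U := by
    intro x hx
    obtain ⟨g, hg, hgx⟩ := Group.mem_conjugatesOfSet_iff.1 hx
    obtain ⟨y, rfl⟩ := isConj_iff.1 hgx
    calc ‖ρ (y * g * y⁻¹) - 1‖ = ‖ρ y * (ρ g - 1) * ρ y⁻¹‖ := by
          rw [mul_sub, sub_mul, mul_one, ← map_mul, ← map_mul, ← map_mul, mul_inv_cancel, map_one]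
      _ ≤ 1 * ‖ρ g - 1‖ * 1 := norm_mul_le_of_le (norm_mul_le_of_le (hρ _) le_rfl) (hρ _)
      _ < 1 / 2 := by rw [one_mul, mul_one]; exact hg
  have : IsMulCommutative ((Subgroup.normalClosure U).map ρ.toHomUnits) := by
    rw [Subgroup.normalClosure, MonoidHom.map_closure]
    refine Subgroup.isMulCommutative_closure ?_
    rintro _ ⟨x, hx, rfl⟩ _ ⟨y, hy, rfl⟩
    exact commute_of_norm_sub_one_lt_half ρ.toHomUnits hρ (hconj hx) (hconj hy)
  have hcomm : Commute (ρ.toHomUnits g) (ρ.toHomUnits h) := congrArg Subtype.val <|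
    mul_comm' (⟨_, Subgroup.mem_map_of_mem _ hg⟩ : (Subgroup.normalClosure U).map ρ.toHomUnits)
      ⟨_, Subgroup.mem_map_of_mem _ hh⟩
  exact hcomm.map (Units.coeHom R)

theorem exists_normal_index_le_forall_commute [FiniteDimensional ℝ R] (hρ : ∀ g, ‖ρ g‖ ≤ 1) :
    ∃ H : Subgroup G, H.Normal ∧ H.index ≤ 5 ^ finrank ℝ R ∧
      ∀ g h : H, Commute (ρ g) (ρ h) := by
  set H := Subgroup.normalClosure {g | ‖ρ g - 1‖ < 1 / 2}
  refine ⟨H, Subgroup.normalClosure_normal, ?_,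
    fun g h ↦ commute_of_mem_normalClosure_norm_sub_one_lt_half hρ g.2 h.2⟩
  refine Nat.le_of_mul_le_mul_left ?_ (Nat.card_pos (α := H))
  calc Nat.card H * H.index = Nat.card G := H.card_mul_index
    _ ≤ 5 ^ finrank ℝ R * {g | ‖ρ g - 1‖ < 1 / 2}.ncard :=
      card_le_mul_ncard_norm_map_sub_one_lt_half hρ
    _ ≤ 5 ^ finrank ℝ R * Nat.card H := by
        gcongr
        exact Set.ncard_le_ncard Subgroup.subset_normalClosure
    _ = _ := mul_comm _ _

end BoundedRepresentation

/-- The Bohr set of radius `δ` of a family of characters `χ i : H → S¹`. For finite `ι` it is a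
`(δ, |ι|)`-Bohr neighborhood in `H`. -/
def bohrSet {H ι : Type*} [Group H] (χ : ι → H →* Circle) (δ : ℝ) : Set H :=
  {h | ∀ i, ‖(χ i h : ℂ) - 1‖ < δ}

section BohrSet

variable {H ι : Type*} [Group H] {δ : ℝ}

theorem inv_mem_bohrSet {χ : ι → H →* Circle} {h : H} (hh : h ∈ bohrSet χ δ) :
    h⁻¹ ∈ bohrSet χ δ := fun i ↦ by
  rw [map_inv, Circle.coe_inv_eq_conj, ← Complex.norm_conj, map_sub, Complex.conj_conj, map_one]
  exact hh i

theorem bohrSet_cons_one {m : ℕ} (χ : Fin m → H →* Circle) (hδ : 0 < δ) :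
    bohrSet (Fin.cons 1 χ : Fin (m + 1) → H →* Circle) δ = bohrSet χ δ := by
  ext h
  simp [bohrSet, Fin.forall_fin_succ, hδ]

theorem isBohrNbhdIn_image_bohrSet {G : Type*} [Group G] (H : Subgroup G) {m : ℕ}
    (χ : Fin m → H →* Circle) (δ : ℝ) : IsBohrNbhdIn H δ m ((↑) '' bohrSet χ δ) :=
  ⟨MonoidHom.pi χ, Set.ext fun _ ↦ exists_congr fun _ ↦ and_comm⟩

theorem card_le_mul_ncard_bohrSet [Finite H] [Fintype ι] (χ : ι → H →* Circle) :
    Nat.card H ≤ 5 ^ (2 * Fintype.card ι) * (bohrSet χ (1 / 2)).ncard := by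
  set ρ : H →* (ι → ℂ) := MonoidHom.pi fun i ↦ Circle.coeHom.comp (χ i)
  have hbohr : bohrSet χ (1 / 2) = {h | ‖ρ h - 1‖ < 1 / 2} := Set.ext fun h ↦
    (pi_norm_lt_iff (by norm_num)).symm
  have hdim : finrank ℝ (ι → ℂ) = 2 * Fintype.card ι := by
    rw [finrank_real_of_complex, finrank_fintype_fun_eq_card]
  rw [hbohr, ← hdim]
  exact card_le_mul_ncard_norm_map_sub_one_lt_half fun h ↦
    (pi_norm_le_iff_of_nonneg zero_le_one).2 fun i ↦ (Circle.norm_coe _).le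

end BohrSet

section IsometricRepresentation

variable {G V : Type*} [Group G] [NormedAddCommGroup V] [InnerProductSpace ℂ V]
  {ρ : G →* (V →L[ℂ] V)}

theorem isStarNormal_of_forall_norm_map [CompleteSpace V] (hρ : ∀ g v, ‖ρ g v‖ = ‖v‖) (g : G) :
    IsStarNormal (ρ g) := by
  have hleft : star (ρ g) * ρ g = 1 :=
    (ContinuousLinearMap.norm_map_iff_adjoint_comp_self _).1 (hρ g)
  have hright : ρ g * ρ g⁻¹ = 1 := by rw [← map_mul, mul_inv_cancel, map_one]
  have hstar : star (ρ g) = ρ g⁻¹ := left_inv_eq_right_inv hleft hright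
  exact ⟨by rw [Commute, SemiconjBy, hleft, hstar, hright]⟩

theorem exists_orthonormalBasis_character [FiniteDimensional ℂ V] (hρ : ∀ g v, ‖ρ g v‖ = ‖v‖)
    (hcomm : ∀ g h, Commute (ρ g) (ρ h)) :
    ∃ (b : OrthonormalBasis (Fin (finrank ℂ V)) ℂ V) (χ : Fin (finrank ℂ V) → G →* Circle),
      ∀ g i, ρ g (b i) = (χ i g : ℂ) • b i := by
  have := FiniteDimensional.complete ℂ V
  obtain ⟨b, hb⟩ := exists_orthonormalBasis_forall_eigenvector
    (isStarNormal_of_forall_norm_map hρ) hcomm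
  choose μ hμ using hb
  have hne (i) : b i ≠ 0 := b.orthonormal.ne_zero i
  refine ⟨b, fun i ↦ MonoidHom.mk' (fun g ↦ ⟨μ i g, ?_⟩) fun g h ↦ ?_, fun g i ↦ hμ i g⟩
  · have hnorm := hρ g (b i)
    rw [hμ, norm_smul, b.norm_eq_one, mul_one] at hnorm
    exact mem_sphere_zero_iff_norm.2 hnorm
  · refine Circle.ext (smul_left_injective ℂ (hne i) ?_)
    calc μ i (g * h) • b i = ρ g (ρ h (b i)) := by rw [← hμ, map_mul]; rfl
      _ = (μ i g * μ i h) • b i := by rw [hμ, map_smul, hμ, smul_smul, mul_comm]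

theorem norm_apply_sub_le_of_mem_bohrSet {κ : Type*} [Fintype κ] {b : OrthonormalBasis κ ℂ V}
    {χ : κ → G →* Circle} (hχ : ∀ g i, ρ g (b i) = (χ i g : ℂ) • b i) {δ : ℝ} (hδ : 0 ≤ δ) {g : G}
    (hg : g ∈ bohrSet χ δ) (v : V) : ‖ρ g v - v‖ ≤ δ * ‖v‖ :=
  norm_apply_le_of_forall_eigenvector b (T := (ρ g : V →ₗ[ℂ] V) - 1) (μ := fun i ↦ (χ i g : ℂ) - 1)
    (fun i ↦ by simp [hχ, sub_smul]) hδ fun i _ ↦ (hg i).le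

theorem exists_normal_index_le_character_norm_apply_sub_le [Finite G] [FiniteDimensional ℂ V]
    (hρ : ∀ g v, ‖ρ g v‖ = ‖v‖) :
    ∃ H : Subgroup G, H.Normal ∧ H.index ≤ 5 ^ (2 * finrank ℂ V ^ 2) ∧
      ∃ χ : Fin (finrank ℂ V) → H →* Circle,
        ∀ δ ≥ 0, ∀ h ∈ bohrSet χ δ, ∀ v, ‖ρ h v - v‖ ≤ δ * ‖v‖ := by
  have hdim : finrank ℝ (V →L[ℂ] V) = 2 * finrank ℂ V ^ 2 := by
    rw [finrank_real_of_complex, ← LinearMap.toContinuousLinearMap.finrank_eq,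
      finrank_linearMap, sq]
  obtain ⟨H, hnormal, hindex, hcomm⟩ := exists_normal_index_le_forall_commute (ρ := ρ)
    fun g ↦ ContinuousLinearMap.opNorm_le_bound _ zero_le_one fun v ↦ by rw [hρ, one_mul]
  obtain ⟨b, χ, hχ⟩ := exists_orthonormalBasis_character (ρ := ρ.comp H.subtype)
    (fun g ↦ hρ g) hcomm
  exact ⟨H, hnormal, hdim ▸ hindex, χ, fun δ hδ h hh ↦ norm_apply_sub_le_of_mem_bohrSet hχ hδ hh⟩

theorem exists_normal_index_le_character_norm_apply_sub_le_of_invariant [Finite G]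
    [FiniteDimensional ℂ V] (σ : G →* (V ≃ₗᵢ[ℂ] V)) {W : Submodule ℂ V}
    (hW : ∀ g, ∀ v ∈ W, σ g v ∈ W) :
    ∃ H : Subgroup G, H.Normal ∧ H.index ≤ 5 ^ (2 * finrank ℂ W ^ 2) ∧
      ∃ χ : Fin (finrank ℂ W) → H →* Circle,
        ∀ δ ≥ 0, ∀ h ∈ bohrSet χ δ, ∀ v ∈ W, ‖σ h v - v‖ ≤ δ * ‖v‖ := by
  let ρ : G →* (W →L[ℂ] W) :=
    { toFun g := ((σ g).toLinearEquiv.toLinearMap.restrict (hW g)).toContinuousLinearMap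
      map_one' := by ext v; simp
      map_mul' g h := by ext v; simp }
  obtain ⟨H, hnormal, hindex, χ, hχ⟩ := exists_normal_index_le_character_norm_apply_sub_le (ρ := ρ)
    fun g v ↦ (σ g).norm_map v
  exact ⟨H, hnormal, hindex, χ, fun δ hδ h hh v hv ↦ hχ δ hδ h hh ⟨v, hv⟩⟩

end IsometricRepresentation

section SpectralCutoff

variable {𝕜 V ι κ : Type*} [RCLike 𝕜] [NormedAddCommGroup V] [InnerProductSpace 𝕜 V] [Fintype ι]
  [Fintype κ] {T : V →ₗ[𝕜] V}

theorem sum_sq_norm_apply_eq_of_isSymmetric (hT : T.IsSymmetric) (b : OrthonormalBasis ι 𝕜 V)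
    (b' : OrthonormalBasis κ 𝕜 V) : ∑ i, ‖T (b i)‖ ^ 2 = ∑ j, ‖T (b' j)‖ ^ 2 := by
  simp only [← b'.sum_sq_norm_inner_right (T (b _))]
  rw [sum_comm]
  refine sum_congr rfl fun j _ ↦ ?_
  simp only [← hT (b' j), b.sum_sq_norm_inner_left]

theorem mem_span_image_of_apply_eq_smul (hT : T.IsSymmetric) (b : OrthonormalBasis κ 𝕜 V)
    {l : κ → ℝ} (hb : ∀ i, T (b i) = (l i : 𝕜) • b i) {s : Set κ} {a : ℝ}
    (hs : ∀ i, l i = a → i ∈ s) {v : V} (hv : T v = (a : 𝕜) • v) :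
    v ∈ Submodule.span 𝕜 (b '' s) := by
  rw [← b.sum_repr' v]
  refine Submodule.sum_mem _ fun j _ ↦ ?_
  by_cases hj : l j = a
  · exact Submodule.smul_mem _ _ (Submodule.subset_span (Set.mem_image_of_mem b (hs j hj)))
  · have hinner : inner 𝕜 (b j) v = 0 := by
      have := hT (b j) v
      rw [hb, hv, inner_smul_left, inner_smul_right, RCLike.conj_ofReal] at this
      rcases mul_eq_mul_right_iff.1 this with h | h
      · exact absurd (RCLike.ofReal_inj.1 h) hj
      · exact h
    simp [hinner]

theorem exists_submodule_finrank_mul_sq_le_sum_sq_norm [FiniteDimensional 𝕜 V]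
    (hT : T.IsSymmetric) (b : OrthonormalBasis ι 𝕜 V) {c : ℝ} (hc : 0 ≤ c) :
    ∃ W : Submodule 𝕜 V, (∀ S : V →ₗ[𝕜] V, Commute S T → ∀ v ∈ W, S v ∈ W) ∧
      finrank 𝕜 W * c ^ 2 ≤ ∑ i, ‖T (b i)‖ ^ 2 ∧ ∀ v ∈ Wᗮ, ‖T v‖ ≤ c * ‖v‖ := by
  classical
  set e := hT.eigenvectorBasis rfl
  set l := hT.eigenvalues rfl
  have hl : ∀ i, T (e i) = (l i : 𝕜) • e i := hT.apply_eigenvectorBasis rfl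
  set s : Finset (Fin (finrank 𝕜 V)) := {i | c ≤ ‖l i‖}
  refine ⟨Submodule.span 𝕜 (e '' s), fun S hS v hv ↦ ?_, ?_, fun v hv ↦ ?_⟩
  · suffices hle : Submodule.span 𝕜 (e '' s) ≤ (Submodule.span 𝕜 (e '' s)).comap S from hle hv
    rw [Submodule.span_le]
    rintro _ ⟨i, hi, rfl⟩
    refine mem_span_image_of_apply_eq_smul hT e hl (a := l i) (fun j hj ↦ ?_) ?_
    · simpa [s, hj] using hi
    · rw [← map_smul, ← hl]
      exact (LinearMap.congr_fun hS (e i)).symm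
  · have hdim : finrank 𝕜 (Submodule.span 𝕜 (e '' s)) ≤ #s := by
      rw [← coe_image]; exact (finrank_span_finset_le_card _).trans card_image_le
    calc (finrank 𝕜 (Submodule.span 𝕜 (e '' s)) * c ^ 2 : ℝ) ≤ ∑ i ∈ s, c ^ 2 := by
          rw [sum_const, nsmul_eq_mul]; gcongr
      _ ≤ ∑ i ∈ s, ‖T (e i)‖ ^ 2 := sum_le_sum fun i hi ↦ by
          rw [hl, norm_smul, e.norm_eq_one, mul_one, RCLike.norm_ofReal]
          exact pow_le_pow_left₀ hc ((mem_filter_univ i).1 hi) 2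
      _ ≤ ∑ i, ‖T (e i)‖ ^ 2 := sum_le_univ_sum_of_nonneg fun _ ↦ by positivity
      _ = ∑ i, ‖T (b i)‖ ^ 2 := sum_sq_norm_apply_eq_of_isSymmetric hT e b
  · refine norm_apply_le_of_forall_eigenvector e hl hc fun i hi ↦ ?_
    by_contra! h
    refine hi ((Submodule.mem_orthogonal _ _).1 hv _ (Submodule.subset_span ⟨i, ?_, rfl⟩))
    simpa [s] using h.le

end SpectralCutoff

theorem norm_apply_sub_le_of_norm_apply_le_on_orthogonal {𝕜 V : Type*} [RCLike 𝕜]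
    [NormedAddCommGroup V] [InnerProductSpace 𝕜 V] {W : Submodule 𝕜 V} [W.HasOrthogonalProjection]
    {T : V →ₗ[𝕜] V} (hTW : ∀ v ∈ W, T v ∈ W) {c : ℝ} (hc : 0 ≤ c)
    (hT : ∀ v ∈ Wᗮ, ‖T v‖ ≤ c * ‖v‖) (σ : V ≃ₗᵢ[𝕜] V) {δ : ℝ} (hδ : 0 ≤ δ)
    (hσ : ∀ v ∈ W, ‖σ v - v‖ ≤ δ * ‖v‖) (v : V) :
    ‖σ (T v) - T v‖ ≤ δ * ‖T v‖ + (2 + δ) * (c * ‖v‖) := by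
  obtain ⟨p, hp, q, hq, rfl⟩ := W.exists_add_mem_mem_orthogonal v
  have hTq : ‖T q‖ ≤ c * ‖p + q‖ := (hT q hq).trans <| by
    gcongr
    refine le_of_sq_le_sq ?_ (norm_nonneg _)
    rw [sq, sq, norm_add_sq_eq_norm_sq_add_norm_sq_of_inner_eq_zero p q
      (Submodule.inner_right_of_mem_orthogonal hp hq)]
    nlinarith [norm_nonneg p]
  have hTp : ‖T p‖ ≤ ‖T (p + q)‖ + ‖T q‖ := by
    simpa using norm_sub_le (T (p + q)) (T q)
  calc ‖σ (T (p + q)) - T (p + q)‖ = ‖(σ (T p) - T p) + (σ (T q) - T q)‖ := by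
        rw [map_add, map_add, add_sub_add_comm]
    _ ≤ δ * ‖T p‖ + (‖T q‖ + ‖T q‖) :=
        norm_add_le_of_le (hσ _ (hTW p hp)) (norm_sub_le_of_le (σ.norm_map _).le le_rfl)
    _ ≤ δ * (‖T (p + q)‖ + ‖T q‖) + (‖T q‖ + ‖T q‖) := by gcongr
    _ ≤ δ * ‖T (p + q)‖ + (2 + δ) * (c * ‖p + q‖) := by nlinarith

theorem exists_ne_zero_of_norm_sub_sq_lt {𝕜 ι : Type*} [RCLike 𝕜] [Fintype ι]
    {v w : EuclideanSpace 𝕜 ι} (h : ‖v - w‖ ^ 2 < ‖v‖ ^ 2 + ‖w‖ ^ 2) :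
    ∃ i, v i ≠ 0 ∧ w i ≠ 0 := by
  by_contra! hvw
  have hinner : inner 𝕜 v w = 0 := by
    rw [PiLp.inner_apply]
    refine sum_eq_zero fun i _ ↦ ?_
    by_cases hi : v i = 0
    · rw [hi, inner_zero_left]
    · rw [hvw i hi, inner_zero_right]
  rw [@norm_sub_sq 𝕜, hinner] at h
  simp at h

section Convolution

variable {G : Type*} [Group G] [Fintype G]

/-- The left regular representation of a finite group on `ℓ²(G)`. -/
noncomputable def leftRegular (G : Type*) [Group G] [Fintype G] :
    G →* (EuclideanSpace ℂ G ≃ₗᵢ[ℂ] EuclideanSpace ℂ G) where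
  toFun g := LinearIsometryEquiv.piLpCongrLeft 2 ℂ ℂ (Equiv.mulLeft g)
  map_one' := by
    ext v x
    change v (1⁻¹ * x) = v x
    rw [inv_one, one_mul]
  map_mul' g h := by
    ext v x
    change v ((g * h)⁻¹ * x) = v (h⁻¹ * (g⁻¹ * x))
    rw [mul_inv_rev, mul_assoc]

/-- Right convolution `v ↦ v * 1_S` by the indicator function of `S` on `ℓ²(G)`. -/
noncomputable def rightConv (S : Finset G) : EuclideanSpace ℂ G →ₗ[ℂ] EuclideanSpace ℂ G :=
  ∑ s ∈ S, (LinearIsometryEquiv.piLpCongrLeft 2 ℂ ℂ (Equiv.mulRight s)).toLinearEquiv.toLinearMap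

theorem leftRegular_apply (g : G) (v : EuclideanSpace ℂ G) (x : G) :
    leftRegular G g v x = v (g⁻¹ * x) := rfl

variable {S : Finset G}

theorem rightConv_apply (v : EuclideanSpace ℂ G) (x : G) :
    rightConv S v x = ∑ s ∈ S, v (x * s⁻¹) := by
  simp [rightConv]

theorem commute_leftRegular_rightConv (g : G) :
    Commute (leftRegular G g).toLinearEquiv.toLinearMap (rightConv S) := by
  ext v x
  simp [rightConv_apply, leftRegular_apply, mul_assoc]

theorem isSymmetric_rightConv (hS : ∀ s ∈ S, s⁻¹ ∈ S) : (rightConv S).IsSymmetric := fun v w ↦ by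
  have hshift (s : G) : ∑ x, inner ℂ (v (x * s⁻¹)) (w x) = ∑ x, inner ℂ (v x) (w (x * s)) :=
    Fintype.sum_equiv (Equiv.mulRight s⁻¹) _ _ fun x ↦ by simp
  simp only [PiLp.inner_apply, rightConv_apply, sum_inner, inner_sum]
  rw [sum_comm, sum_comm (s := univ)]
  simp only [hshift]
  exact sum_nbij' (·⁻¹) (·⁻¹) hS hS (by simp) (by simp) (by simp)

theorem norm_sq_rightConv_single [DecidableEq G] (x : G) :
    ‖rightConv S (EuclideanSpace.single x 1)‖ ^ 2 = #S := by
  have hcoord (y : G) : ‖rightConv S (EuclideanSpace.single x 1) y‖ ^ 2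
      = if x⁻¹ * y ∈ S then 1 else 0 := by
    have heq (s : G) : y * s⁻¹ = x ↔ x⁻¹ * y = s := by
      rw [mul_inv_eq_iff_eq_mul, inv_mul_eq_iff_eq_mul]
    simp [rightConv_apply, heq, apply_ite]
  rw [EuclideanSpace.norm_sq_eq]
  simp only [hcoord, sum_boole]
  exact congrArg Nat.cast (card_equiv (Equiv.mulLeft x⁻¹) fun y ↦ by simp)

theorem mem_mul_of_rightConv_rightConv_single_apply_ne_zero [DecidableEq G] {x : G}
    (h : rightConv S (rightConv S (EuclideanSpace.single 1 1)) x ≠ 0) : x ∈ S * S := by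
  obtain ⟨s, hs, hs'⟩ := exists_ne_zero_of_sum_ne_zero (rightConv_apply _ x ▸ h)
  obtain ⟨t, ht, ht'⟩ := exists_ne_zero_of_sum_ne_zero (rightConv_apply _ (x * s⁻¹) ▸ hs')
  have hone : x * s⁻¹ * t⁻¹ = 1 := by
    by_contra hne
    exact ht' (by simp [hne])
  exact mem_mul.2 ⟨t, ht, s, hs, by rw [← mul_inv_eq_one.1 hone, inv_mul_cancel_right]⟩

theorem card_sq_le_sqrt_mul_norm_rightConv_rightConv_single [DecidableEq G]
    (hS : ∀ s ∈ S, s⁻¹ ∈ S) :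
    (#S : ℝ) ^ 2 ≤ √(Nat.card G) * ‖rightConv S (rightConv S (EuclideanSpace.single 1 1))‖ := by
  set u : EuclideanSpace ℂ G := WithLp.toLp 2 1
  have hu : rightConv S u = (#S : ℂ) • u := by
    ext x
    simp [rightConv_apply, u]
  have hnorm : ‖u‖ = √(Nat.card G) := by simp [EuclideanSpace.norm_eq, u]
  have hinner : inner ℂ u (rightConv S (rightConv S (EuclideanSpace.single 1 1)))
      = (#S : ℂ) ^ 2 := by
    rw [← isSymmetric_rightConv hS, hu, inner_smul_left, ← isSymmetric_rightConv hS, hu,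
      inner_smul_left]
    simp [u, sq, EuclideanSpace.inner_single_right]
  calc (#S : ℝ) ^ 2 = ‖inner ℂ u (rightConv S (rightConv S (EuclideanSpace.single 1 1)))‖ := by
        simp [hinner]
    _ ≤ √(Nat.card G) * ‖rightConv S (rightConv S (EuclideanSpace.single 1 1))‖ :=
        hnorm ▸ norm_inner_le_norm _ _

theorem card_mul_norm_rightConv_single_le [DecidableEq G] (hS : ∀ s ∈ S, s⁻¹ ∈ S) {N : ℕ}
    (hN : Nat.card G ≤ N * #S) : #S * ‖rightConv S (EuclideanSpace.single 1 1)‖ ≤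
      N * ‖rightConv S (rightConv S (EuclideanSpace.single 1 1))‖ := by
  set F := rightConv S (rightConv S (EuclideanSpace.single 1 1))
  obtain ⟨hN1, hS0⟩ : (1 : ℝ) ≤ N ∧ (0 : ℝ) < #S :=
    mod_cast CanonicallyOrderedAdd.mul_pos.1 (Nat.card_pos.trans_le hN)
  have hfour : (#S : ℝ) * (#S : ℝ) ^ 3 ≤ #S * (N * ‖F‖ ^ 2) := by
    calc (#S : ℝ) * (#S : ℝ) ^ 3 = ((#S : ℝ) ^ 2) ^ 2 := by ring
      _ ≤ (√(Nat.card G) * ‖F‖) ^ 2 := by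
          gcongr
          exact card_sq_le_sqrt_mul_norm_rightConv_rightConv_single hS
      _ = Nat.card G * ‖F‖ ^ 2 := by rw [mul_pow, Real.sq_sqrt (Nat.cast_nonneg _)]
      _ ≤ (N * #S) * ‖F‖ ^ 2 := by gcongr; exact_mod_cast hN
      _ = #S * (N * ‖F‖ ^ 2) := by ring
  refine le_of_sq_le_sq ?_ (by positivity)
  calc (#S * ‖rightConv S (EuclideanSpace.single 1 1)‖ : ℝ) ^ 2 = (#S : ℝ) ^ 3 := by
        rw [mul_pow, norm_sq_rightConv_single]; ring
    _ ≤ N * ‖F‖ ^ 2 := le_of_mul_le_mul_left hfour hS0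
    _ ≤ N * (N * ‖F‖ ^ 2) := le_mul_of_one_le_left (by positivity) hN1
    _ = (N * ‖F‖) ^ 2 := by ring

theorem mem_mul_mul_of_forall_norm_leftRegular_sub_le [DecidableEq G] (hS : ∀ s ∈ S, s⁻¹ ∈ S)
    {N : ℕ} (hN : Nat.card G ≤ N * #S) {W : Submodule ℂ (EuclideanSpace ℂ G)}
    (hWS : ∀ v ∈ W, rightConv S v ∈ W)
    (hW : ∀ v ∈ Wᗮ, ‖rightConv S v‖ ≤ #S / (5 * N) * ‖v‖) {g : G}
    (hg : ∀ v ∈ W, ‖leftRegular G g v - v‖ ≤ 1 / 2 * ‖v‖) : g ∈ S * S * (S * S) := by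
  set f : EuclideanSpace ℂ G := rightConv S (EuclideanSpace.single 1 1)
  set F := rightConv S f
  obtain ⟨hN0, hS0⟩ : (0 : ℝ) < N ∧ (0 : ℝ) < #S :=
    mod_cast CanonicallyOrderedAdd.mul_pos.1 (Nat.card_pos.trans_le hN)
  have hfF : #S / (5 * N) * ‖f‖ ≤ ‖F‖ / 5 := by
    rw [div_mul_eq_mul_div, div_le_div_iff₀ (by positivity) (by norm_num)]
    linarith [card_mul_norm_rightConv_single_le hS hN]
  have hle : ‖leftRegular G g F - F‖ ≤ ‖F‖ := by
    have := norm_apply_sub_le_of_norm_apply_le_on_orthogonal hWS (by positivity) hW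
      (leftRegular G g) (by norm_num) hg f
    linarith
  have hF0 : 0 < ‖F‖ := pos_of_mul_pos_right ((pow_pos hS0 2).trans_le
    (card_sq_le_sqrt_mul_norm_rightConv_rightConv_single hS)) (Real.sqrt_nonneg _)
  obtain ⟨x, hgx, hx⟩ : ∃ x, leftRegular G g F x ≠ 0 ∧ F x ≠ 0 := by
    refine exists_ne_zero_of_norm_sub_sq_lt ?_
    rw [LinearIsometryEquiv.norm_map]
    nlinarith [norm_nonneg (leftRegular G g F - F)]
  have hinv : S⁻¹ = S := by
    ext s
    rw [mem_inv']
    exact ⟨fun h ↦ inv_inv s ▸ hS _ h, hS s⟩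
  have hgx' : (g⁻¹ * x)⁻¹ ∈ (S * S)⁻¹ :=
    inv_mem_inv (mem_mul_of_rightConv_rightConv_single_apply_ne_zero hgx)
  rw [mul_inv_rev, hinv, mul_inv_rev, inv_inv] at hgx'
  rw [← mul_inv_cancel_left x g]
  exact mul_mem_mul (mem_mul_of_rightConv_rightConv_single_apply_ne_zero hx) hgx'

end Convolution

theorem exists_normal_index_le_bohrSet_subset_mul_mul {G : Type*} [Group G] [Finite G]
    [DecidableEq G] {S : Finset G} (hS : ∀ s ∈ S, s⁻¹ ∈ S) {N : ℕ} (hN : Nat.card G ≤ N * #S) :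
    ∃ H : Subgroup G, H.Normal ∧ ∃ m ≤ 25 * N ^ 3, H.index ≤ 5 ^ (2 * m ^ 2) ∧
      ∃ χ : Fin m → H →* Circle, ∀ h ∈ bohrSet χ (1 / 2), (h : G) ∈ S * S * (S * S) := by
  cases nonempty_fintype G
  obtain ⟨hN0, hS0⟩ : (0 : ℝ) < N ∧ (0 : ℝ) < #S :=
    mod_cast CanonicallyOrderedAdd.mul_pos.1 (Nat.card_pos.trans_le hN)
  -- With this cutoff, the part of `1_S` orthogonal to `W` contributes a vector of norm at most
  -- `‖1_S * 1_S‖ / 5` to `1_S * 1_S`.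
  obtain ⟨W, hWinv, hdim, hW⟩ := exists_submodule_finrank_mul_sq_le_sum_sq_norm
    (isSymmetric_rightConv hS) (EuclideanSpace.basisFun G ℂ)
    (c := #S / (5 * N)) (by positivity)
  obtain ⟨H, hnormal, hindex, χ, hχ⟩ :=
    exists_normal_index_le_character_norm_apply_sub_le_of_invariant (leftRegular G)
      fun g ↦ hWinv _ (commute_leftRegular_rightConv g)
  refine ⟨H, hnormal, finrank ℂ W, ?_, hindex, χ, fun h hh ↦
    mem_mul_mul_of_forall_norm_leftRegular_sub_le hS hN (hWinv _ (Commute.refl _)) hW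
      (hχ _ (by norm_num) h hh)⟩
  suffices (finrank ℂ W : ℝ) ≤ 25 * N ^ 3 from mod_cast this
  refine le_of_mul_le_mul_right ?_ (by positivity : (0 : ℝ) < (#S / (5 * N)) ^ 2)
  calc (finrank ℂ W : ℝ) * (#S / (5 * N)) ^ 2 ≤ Nat.card G * #S := by
        simpa [norm_sq_rightConv_single] using hdim
    _ ≤ (N * #S) * #S := by gcongr; exact_mod_cast hN
    _ = 25 * N ^ 3 * (#S / (5 * N)) ^ 2 := by field_simp; norm_num

section Crossings

variable {G : Type*} [Group G] [DecidableEq G]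

/-- The number of `b ∈ B` such that right multiplication by `b` moves `x` across the boundary of
`A`. -/
def crossings (A B : Finset G) (x : G) : ℕ := #{b ∈ B | ¬(x ∈ A ↔ x * b ∈ A)}

variable {A B : Finset G} {x : G}

theorem card_smul_sdiff_eq_crossings (hx : x ∈ A) : #((x • B) \ A) = crossings A B x := by
  rw [sdiff_eq_filter, smul_finset_def, filter_image,
    card_image_of_injective _ (MulAction.injective x)]
  simp [crossings, hx]

theorem card_smul_inter_eq_crossings (hx : x ∉ A) : #((x • B) ∩ A) = crossings A B x := by
  rw [← filter_mem_eq_inter, smul_finset_def, filter_image,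
    card_image_of_injective _ (MulAction.injective x)]
  simp [crossings, hx]

theorem card_smul_inter_lt_or_card_smul_sdiff_lt {t : ℝ} (hx : crossings A B x < t) :
    (#((x • B) ∩ A) : ℝ) < t ∨ (#((x • B) \ A) : ℝ) < t := by
  by_cases hxA : x ∈ A
  · exact .inr (card_smul_sdiff_eq_crossings hxA ▸ hx)
  · exact .inl (card_smul_inter_eq_crossings hxA ▸ hx)

theorem card_filter_mem_smul_add_crossings (hB : ∀ b ∈ B, b⁻¹ ∈ B) (hx : x ∈ A) :
    #{y ∈ A | x ∈ y • B} + crossings A B x = #B := by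
  have hcard : #{y ∈ A | x ∈ y • B} = #{b ∈ B | x * b ∈ A} := by
    refine (card_equiv (Equiv.mulLeft x) fun b ↦ ?_).symm
    have hb : b ∈ B ↔ b⁻¹ ∈ B := ⟨hB b, fun h ↦ inv_inv b ▸ hB _ h⟩
    simp [← inv_smul_mem_iff, hb, and_comm]
  rw [hcard, crossings]
  simp only [hx, true_iff]
  exact card_filter_add_card_filter_not _

variable {N : ℝ}

theorem sum_crossings_le [Fintype G] (hB : (B : Set G) ⊆ stabR (A : Set G) N) :
    ∑ x, (crossings A B x : ℝ) ≤ N * #B := by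
  have hcomm : ∑ x, crossings A B x = ∑ b ∈ B, #{x | ¬(x ∈ A ↔ x * b ∈ A)} :=
    sum_card_bipartiteAbove_eq_sum_card_bipartiteBelow _
  rw [← Nat.cast_sum, hcomm, Nat.cast_sum, mul_comm, ← nsmul_eq_mul]
  exact sum_le_card_nsmul _ _ _ fun b hb ↦ mem_stabR_coe_iff.1 (hB hb)

theorem mul_card_filter_le_crossings_le [Fintype G] (hB : (B : Set G) ⊆ stabR (A : Set G) N)
    (hne : B.Nonempty) (t : ℝ) : t * #{x | t * #B ≤ crossings A B x} ≤ N := by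
  refine le_of_mul_le_mul_right ?_ (Nat.cast_pos.2 hne.card_pos : (0 : ℝ) < #B)
  calc t * #{x | t * #B ≤ crossings A B x} * #B
      = ∑ x with t * #B ≤ crossings A B x, t * #B := by rw [sum_const, nsmul_eq_mul]; ring
    _ ≤ ∑ x with t * #B ≤ crossings A B x, (crossings A B x : ℝ) :=
        sum_le_sum fun x hx ↦ ((mem_filter_univ x).1 hx)
    _ ≤ ∑ x, (crossings A B x : ℝ) := sum_le_univ_sum_of_nonneg fun _ ↦ Nat.cast_nonneg _
    _ ≤ N * #B := sum_crossings_le hB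

theorem exists_forall_notMem_card_smul_lt [Finite G] (hB : (B : Set G) ⊆ stabR (A : Set G) N)
    (hne : B.Nonempty) (t : ℝ) : ∃ Z : Finset G, t * #Z ≤ N ∧ ∀ g ∉ Z,
      (#((g • B) ∩ A) : ℝ) < t * #B ∨ (#((g • B) \ A) : ℝ) < t * #B := by
  cases nonempty_fintype G
  exact ⟨_, mul_card_filter_le_crossings_le hB hne t, fun g hg ↦
    card_smul_inter_lt_or_card_smul_sdiff_lt (by simpa using hg)⟩

theorem exists_card_le_card_sdiff_mul_add_le [Finite G] (hinv : ∀ b ∈ B, b⁻¹ ∈ B)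
    (hB : (B : Set G) ⊆ stabR (A : Set G) N) (k : ℕ) : ∃ F : Finset G, #F ≤ k ∧
      (#({x ∈ A | crossings A B x < 1 / 2 * (#B : ℝ)} \ (F * B)) + #((F * B) \ A) : ℝ) ≤
        (1 - #B / (2 * Nat.card G)) ^ k * Nat.card G + k * (N * #B / Nat.card G) := by
  cases nonempty_fintype G
  set A' : Finset G := {x ∈ A | crossings A B x < 1 / 2 * (#B : ℝ)}
  set C : G → Finset G := fun y ↦ if y ∈ A then y • B else ∅ with hC
  have hmem (x y : G) : x ∈ C y ↔ y ∈ A ∧ x ∈ y • B := by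
    by_cases hy : y ∈ A <;> simp [hC, hy]
  have hn : (0 : ℝ) < Nat.card G := mod_cast Nat.card_pos
  have hBn : (#B : ℝ) ≤ Nat.card G := mod_cast Nat.card_eq_fintype_card (α := G) ▸ card_le_univ B
  have hp : (#B / (2 * Nat.card G) : ℝ) ≤ 1 := by
    rw [div_le_one (by positivity)]
    linarith
  have hdense : ∀ x ∈ A', (#B / (2 * Nat.card G) : ℝ) * Fintype.card G ≤ #{y | x ∈ C y} := by
    intro x hx
    obtain ⟨hxA, hx⟩ := mem_filter.1 hx
    have hpoints : ({y | x ∈ C y} : Finset G) = {y ∈ A | x ∈ y • B} := by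
      ext y
      simp only [hmem, mem_filter, mem_univ, true_and]
    have hadd := card_filter_mem_smul_add_crossings hinv hxA
    rify at hadd
    rw [hpoints, ← Nat.card_eq_fintype_card]
    field_simp
    linarith
  have hE : ∑ y, (#(C y \ A) : ℝ) ≤ N * #B / Nat.card G * Fintype.card G := by
    rw [← Nat.card_eq_fintype_card, div_mul_cancel₀ _ hn.ne']
    refine (sum_le_sum fun y _ ↦ ?_).trans (sum_crossings_le hB)
    by_cases hy : y ∈ A
    · simp [hC, hy, card_smul_sdiff_eq_crossings hy]
    · simp [hC, hy]
  obtain ⟨s, hsk, hs⟩ := exists_card_le_card_sdiff_biUnion_add_le C A A' hp hdense hE k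
  have hunion : s.biUnion C = (s.filter (· ∈ A)) * B := by
    ext
    simp only [hmem, mem_biUnion, mem_mul, mem_filter, mem_smul_finset, smul_eq_mul, and_assoc]
  refine ⟨s.filter (· ∈ A), (card_filter_le _ _).trans hsk, ?_⟩
  rw [← hunion]
  refine hs.trans ?_
  gcongr
  exact Nat.card_eq_fintype_card (α := G) ▸ card_le_univ A'

theorem card_symmDiff_le_of_subset_stabR [Finite G] (hB : (B : Set G) ⊆ stabR (A : Set G) N)
    (hne : B.Nonempty) (D : Finset G) : (#(A ∆ D) : ℝ) ≤
      #({x ∈ A | crossings A B x < 1 / 2 * (#B : ℝ)} \ D) + #(D \ A) + 2 * N := by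
  cases nonempty_fintype G
  have hmarkov := mul_card_filter_le_crossings_le hB hne (1 / 2)
  have hsplit : #(A ∆ D) ≤ #({x ∈ A | crossings A B x < 1 / 2 * (#B : ℝ)} \ D) + #(D \ A)
      + #{x | 1 / 2 * (#B : ℝ) ≤ crossings A B x} := by
    refine (card_le_card fun x hx ↦ ?_).trans <|
      (card_union_le _ _).trans (Nat.add_le_add_right (card_union_le _ _) _)
    have := lt_or_ge (crossings A B x : ℝ) (1 / 2 * #B)
    simp only [mem_symmDiff, mem_union, mem_sdiff, mem_filter, mem_univ, true_and] at hx ⊢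
    tauto
  rify at hsplit
  linarith

theorem one_sub_pow_le_inv {p t : ℝ} {k : ℕ} (hp : p ≤ 1) (ht : 0 < t) (hpk : t ≤ k * p) :
    (1 - p) ^ k ≤ t⁻¹ :=
  calc (1 - p) ^ k ≤ Real.exp (-p) ^ k :=
        pow_le_pow_left₀ (sub_nonneg.2 hp) (Real.one_sub_le_exp_neg p) k
    _ = (Real.exp (k * p))⁻¹ := by rw [← Real.exp_nat_mul, mul_neg, Real.exp_neg]
    _ ≤ t⁻¹ := by
        gcongr
        linarith [Real.add_one_le_exp (k * p)]

theorem exists_card_le_symmDiff_mul_lt [Finite G] (hne : B.Nonempty) (hinv : ∀ b ∈ B, b⁻¹ ∈ B)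
    {ε : ℝ} (hε0 : 0 < ε) (hε1 : ε ≤ 1)
    (hB : (B : Set G) ⊆ stabR (A : Set G) (ε ^ 2 / 16 * Nat.card G)) :
    ∃ F : Finset G, (#F : ℝ) ≤ 8 / ε * (Nat.card G / #B) + 1 ∧
      (#(A ∆ (F * B)) : ℝ) < ε * Nat.card G := by
  set k := ⌈8 / ε * (Nat.card G / #B)⌉₊
  have hn : (0 : ℝ) < Nat.card G := mod_cast Nat.card_pos
  have : (0 : ℝ) < #B := mod_cast hne.card_pos
  have hBn : (#B : ℝ) ≤ Nat.card G :=
    mod_cast Set.ncard_coe_finset B ▸ Set.ncard_le_card (B : Set G)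
  have hk : (k : ℝ) ≤ 8 / ε * (Nat.card G / #B) + 1 := (Nat.ceil_lt_add_one (by positivity)).le
  obtain ⟨F, hFk, hF⟩ := exists_card_le_card_sdiff_mul_add_le hinv hB k
  refine ⟨F, (Nat.cast_le.2 hFk).trans hk, ?_⟩
  have hpow : (1 - #B / (2 * Nat.card G) : ℝ) ^ k ≤ ε / 4 := by
    have hpk : 4 / ε ≤ k * (#B / (2 * Nat.card G)) := by
      refine le_of_eq_of_le ?_ (mul_le_mul_of_nonneg_right (Nat.le_ceil _) (by positivity))
      field_simp
      norm_num
    rw [← inv_div 4 ε]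
    refine one_sub_pow_le_inv ?_ (by positivity) hpk
    exact div_le_one_of_le₀ (by linarith) (by positivity)
  have hkN : k * (ε ^ 2 / 16 * Nat.card G * #B / Nat.card G) ≤ 9 / 16 * ε * Nat.card G :=
    calc k * (ε ^ 2 / 16 * Nat.card G * #B / Nat.card G)
        ≤ (8 / ε * (Nat.card G / #B) + 1) * (ε ^ 2 / 16 * Nat.card G * #B / Nat.card G) := by
          gcongr
      _ = ε / 16 * (8 * Nat.card G + ε * #B) := by field_simp
      _ ≤ ε / 16 * (8 * Nat.card G + 1 * Nat.card G) := by gcongr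
      _ = 9 / 16 * ε * Nat.card G := by ring
  have hsq : ε ^ 2 * Nat.card G ≤ ε * Nat.card G := by
    gcongr
    exact pow_le_of_le_one hε0.le hε1 two_ne_zero
  have hpow_mul := mul_le_mul_of_nonneg_right hpow hn.le
  have := mul_pos hε0 hn
  linarith [card_symmDiff_le_of_subset_stabR hB hne (F * B)]

end Crossings

theorem exists_forall_isBohrNbhdIn_subset_mul_mul (N : ℕ) :
    ∃ K : ℕ, ∀ (G : Type*) [Group G] [Finite G] [DecidableEq G] (S : Finset G),
      (∀ s ∈ S, s⁻¹ ∈ S) → Nat.card G ≤ N * #S →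
      ∃ (H : Subgroup G) (m : ℕ) (B : Finset G), H.Normal ∧ H.index ≤ K ∧ 1 ≤ m ∧ m ≤ K ∧
        IsBohrNbhdIn H (1 / 2) m (B : Set G) ∧ (∀ b ∈ B, b⁻¹ ∈ B) ∧ Nat.card G ≤ K * #B ∧
        B ⊆ S * S * (S * S) := by
  refine ⟨5 ^ (2 * (25 * N ^ 3) ^ 2 + 2 * (25 * N ^ 3)), fun G _ _ _ S hS hN ↦ ?_⟩
  set K := 5 ^ (2 * (25 * N ^ 3) ^ 2 + 2 * (25 * N ^ 3)) with hK
  obtain ⟨H, hH, m, hm, hindex, χ, hχ⟩ := exists_normal_index_le_bohrSet_subset_mul_mul hS hN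
  obtain ⟨B, hB⟩ : ∃ B : Finset G, (B : Set G) = (↑) '' bohrSet χ (1 / 2) :=
    (Set.toFinite _).exists_finset_coe
  have hcard : Nat.card H ≤ 5 ^ (2 * m) * #B := by
    rw [← Set.ncard_coe_finset, hB, Set.ncard_image_of_injective _ Subtype.val_injective]
    simpa using card_le_mul_ncard_bohrSet χ
  have hpow : 5 ^ (2 * m ^ 2 + 2 * m) ≤ K := by
    rw [hK]
    gcongr
    norm_num
  -- Adding a trivial character keeps the number of characters positive even if `m = 0`.
  refine ⟨H, m + 1, B, hH, ?_, Nat.le_add_left 1 m, ?_, ?_, fun b hb ↦ ?_, ?_, ?_⟩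
  · exact (hindex.trans (Nat.pow_le_pow_right (by norm_num) le_self_add)).trans hpow
  · exact (show m + 1 ≤ 2 * m ^ 2 + 2 * m + 1 by lia).trans
      ((Nat.lt_pow_self (by norm_num)).trans_le hpow)
  · rw [hB, ← bohrSet_cons_one χ (by norm_num)]
    exact isBohrNbhdIn_image_bohrSet H _ _
  · rw [← mem_coe, hB] at hb ⊢
    obtain ⟨h, hh, rfl⟩ := hb
    exact ⟨h⁻¹, inv_mem_bohrSet hh, rfl⟩
  · calc Nat.card G = Nat.card H * H.index := H.card_mul_index.symm
      _ ≤ 5 ^ (2 * m) * #B * 5 ^ (2 * m ^ 2) := Nat.mul_le_mul hcard hindex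
      _ = 5 ^ (2 * m ^ 2 + 2 * m) * #B := by ring
      _ ≤ K * #B := Nat.mul_le_mul_right _ hpow
  · rw [← coe_subset, hB, Set.image_subset_iff]
    exact hχ

theorem exists_forall_isBohrNbhdIn_subset_stabR (d : ℕ) {η : ℝ} (hη0 : 0 < η) (hη1 : η < 1) :
    ∃ K : ℕ, ∀ (G : Type*) [Group G] [Finite G] (A : Finset G),
      _root_.vcDim (leftFam (A : Set G) Set.univ) < d →
      ∃ (H : Subgroup G) (m : ℕ) (B : Finset G), H.Normal ∧ H.index ≤ K ∧ 1 ≤ m ∧ m ≤ K ∧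
        IsBohrNbhdIn H (1 / 2) m (B : Set G) ∧ (∀ b ∈ B, b⁻¹ ∈ B) ∧ Nat.card G ≤ K * #B ∧
        (B : Set G) ⊆ stabR (A : Set G) (η * Nat.card G) := by
  obtain ⟨M, hM⟩ := exists_forall_card_le_mul_ncard_stabR d
    (div_pos hη0 four_pos) ((div_lt_self hη0 (by norm_num)).trans hη1)
  obtain ⟨K, hK⟩ := exists_forall_isBohrNbhdIn_subset_mul_mul M
  refine ⟨K, fun G _ _ A hA ↦ ?_⟩
  classical
  obtain ⟨S, hS⟩ : ∃ S : Finset G, (S : Set G) = stabR (A : Set G) (η / 4 * Nat.card G) :=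
    (Set.toFinite _).exists_finset_coe
  have hcard : Nat.card G ≤ M * #S := by
    rw [← Set.ncard_coe_finset, hS]
    exact hM G A hA
  have hinv : ∀ s ∈ S, s⁻¹ ∈ S := fun s hs ↦ by
    rw [← mem_coe, hS] at hs ⊢
    exact inv_mem_stabR hs
  have hprod : ((S * S * (S * S) : Finset G) : Set G) ⊆ stabR (A : Set G) (η * Nat.card G) := by
    have hSS := mul_subset_stabR hS.subset hS.subset
    rw [show η * Nat.card G = η / 4 * Nat.card G + η / 4 * Nat.card G +
      (η / 4 * Nat.card G + η / 4 * Nat.card G) by ring]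
    exact mod_cast mul_subset_stabR hSS hSS
  obtain ⟨H, m, B, hH, hindex, hm1, hm, hBohr, hBinv, hBcard, hB⟩ :=
    hK G S hinv hcard
  exact ⟨H, m, B, hH, hindex, hm1, hm, hBohr, hBinv, hBcard, (coe_subset.2 hB).trans hprod⟩

end

/-- Theorem 1.1 of the paper, NIP arithmetic regularity: for `d ≥ 1` and
`ε ∈ (0,1)` there is `C` such that every `d`-NIP subset `A` of a finite group `G` admits a
normal subgroup `H` of index at most `C` and a `(δ,m)`-Bohr neighborhood `B` in `H` of
complexity at most `C` satisfying structure and regularity. -/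
theorem nip_arithmetic_regularity (d : ℕ) (hd : 1 ≤ d)
    (ε : ℝ) (hε0 : 0 < ε) (hε1 : ε < 1) :
    ∃ C : ℝ, ∀ (G : Type*) [Group G] [Fintype G] (A : Set G),
      vcDim (leftFam A (Set.univ : Set G)) < (d : ℕ∞) →
      ∃ (H : Subgroup G) (δ : ℝ) (m : ℕ) (B : Set G),
        H.Normal ∧ (H.index : ℝ) ≤ C ∧
        0 < δ ∧ δ < 1 ∧ 1 / δ ≤ C ∧ 1 ≤ m ∧ (m : ℝ) ≤ C ∧
        IsBohrNbhdIn H δ m B ∧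
        (∃ F : Set G, (F.ncard : ℝ) ≤ C ∧
          ((A ∆ (F * B)).ncard : ℝ) < ε * Nat.card G) ∧
        (∃ Z : Set G, (Z.ncard : ℝ) ≤ ε * Nat.card G ∧
          ∀ g : G, g ∉ Z →
            (((g • B) ∩ A).ncard : ℝ) < ε * B.ncard ∨
            (((g • B) \ A).ncard : ℝ) < ε * B.ncard) := by
  obtain ⟨K, hK⟩ := exists_forall_isBohrNbhdIn_subset_stabR d (η := ε ^ 2 / 16) (by positivity)
    (by nlinarith)
  have hC0 : 0 ≤ 8 / ε * K := by positivity
  refine ⟨8 / ε * K + K + 2, fun G _ _ A hA ↦ ?_⟩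
  classical
  lift A to Finset G using A.toFinite
  obtain ⟨H, m, B, hH, hindex, hm1, hm, hBohr, hinv, hcard, hstab⟩ := hK G A hA
  have hne : B.Nonempty :=
    Finset.card_pos.1 (Nat.pos_of_mul_pos_left (Nat.card_pos.trans_le hcard))
  have hratio : (Nat.card G / B.card : ℝ) ≤ K :=
    div_le_of_le_mul₀ (by positivity) (by positivity) (mod_cast hcard)
  obtain ⟨F, hFcard, hF⟩ := exists_card_le_symmDiff_mul_lt hne hinv hε0 hε1.le hstab
  obtain ⟨Z, hZcard, hZ⟩ := exists_forall_notMem_card_smul_lt hstab hne ε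
  rify at hindex hm
  refine ⟨H, 1 / 2, m, B, hH, by linarith, by norm_num, by norm_num, by norm_num; linarith, hm1,
    by linarith, hBohr, ⟨F, ?_, mod_cast hF⟩, Z, ?_, fun g hg ↦ mod_cast hZ g hg⟩
  · grw [Set.ncard_coe_finset, hFcard, hratio]
    linarith
  · rw [Set.ncard_coe_finset]
    nlinarith
end
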